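/- Let 1 < p < ∞ and let f ∈ L^p([0,1]²) satisfy I_p(f) < ∞ and J_p(f) < ∞. Then there exists a continuous function f̄ in the mixed norm class V_p[V_p] such that f = f̄ almost everywhere, and there is an absolute constant A > 0 (independent of p and f) with W_p(f̄) ≤ A[ω(f;1,1)_p + (1/(p·p'))·K_p(f) + (1/(p·p'))²·I_p(f)]. -/

import Mathlib

open MeasureTheory Filter Set
open scoped ENNReal

noncomputable section

/-- A function of two real variables that is 1-periodic in each variable. -/
def BiPeriodic (f : ℝ → ℝ → ℝ) : Prop :=
  (∀ x y, f (x + 1) y = f x y) ∧ (∀ x y, f x (y + 1) = f x y)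

/-- A 1-periodic function of one real variable. -/
def Periodic1 (g : ℝ → ℝ) : Prop := ∀ x, g (x + 1) = g x

/-- The `L^p` norm of a function over `[0,1]^2` (as a value in `[0,∞]`). -/
noncomputable def lpNorm2 (p : ℝ) (f : ℝ → ℝ → ℝ) : ℝ≥0∞ :=
  (∫⁻ x in Set.Icc (0:ℝ) 1, ∫⁻ y in Set.Icc (0:ℝ) 1,
      ENNReal.ofReal (|f x y| ^ p)) ^ (1 / p)

/-- The `L^p` norm of a function over `[0,1]` (as a value in `[0,∞]`). -/
noncomputable def lpNorm1 (p : ℝ) (g : ℝ → ℝ) : ℝ≥0∞ :=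
  (∫⁻ x in Set.Icc (0:ℝ) 1, ENNReal.ofReal (|g x| ^ p)) ^ (1 / p)

/-- Membership in `L^p([0,1]^2)`: measurable, 1-periodic in each variable,
finite `L^p` norm. -/
def MemLp2 (p : ℝ) (f : ℝ → ℝ → ℝ) : Prop :=
  Measurable (Function.uncurry f) ∧ BiPeriodic f ∧ lpNorm2 p f < ⊤

/-- Membership in `L^p([0,1])` for 1-periodic functions of one variable. -/
def MemLp1 (p : ℝ) (g : ℝ → ℝ) : Prop :=
  Measurable g ∧ Periodic1 g ∧ lpNorm1 p g < ⊤

/-- The (total) `L^p` modulus of continuity `ω(f;δ)_p` of a bivariate function. -/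
noncomputable def modulus2 (p : ℝ) (f : ℝ → ℝ → ℝ) (δ : ℝ) : ℝ≥0∞ :=
  ⨆ (h : ℝ × ℝ) (_ : Real.sqrt (h.1 ^ 2 + h.2 ^ 2) ≤ δ),
    lpNorm2 p (fun x y => f (x + h.1) (y + h.2) - f x y)

/-- The `L^p` modulus of continuity `ω(g;δ)_p` of a univariate function. -/
noncomputable def modulus1 (p : ℝ) (g : ℝ → ℝ) (δ : ℝ) : ℝ≥0∞ :=
  ⨆ (h : ℝ) (_ : h ∈ Set.Icc 0 δ), lpNorm1 p (fun x => g (x + h) - g x)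

/-- The mixed `L^p` modulus of continuity `ω(f;u,v)_p`. -/
noncomputable def mixedModulus (p : ℝ) (f : ℝ → ℝ → ℝ) (u v : ℝ) : ℝ≥0∞ :=
  ⨆ (s : ℝ) (_ : s ∈ Set.Icc 0 u) (t : ℝ) (_ : t ∈ Set.Icc 0 v),
    lpNorm2 p (fun x y => f (x + s) (y + t) - f (x + s) y - f x (y + t) + f x y)

/-- `J_p(f) = ∫₀¹ t^{-1/p} ω(f;t)_p dt/t`. -/
noncomputable def Jp (p : ℝ) (f : ℝ → ℝ → ℝ) : ℝ≥0∞ :=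
  ∫⁻ t in Set.Ioc (0:ℝ) 1, ENNReal.ofReal (t ^ (-(1/p)) / t) * modulus2 p f t

/-- `K_p(f) = ∫₀¹ t^{-1/p} [ω(f;t,1)_p + ω(f;1,t)_p] dt/t`. -/
noncomputable def Kp (p : ℝ) (f : ℝ → ℝ → ℝ) : ℝ≥0∞ :=
  ∫⁻ t in Set.Ioc (0:ℝ) 1,
    ENNReal.ofReal (t ^ (-(1/p)) / t) * (mixedModulus p f t 1 + mixedModulus p f 1 t)

/-- `I_p(f) = ∫₀¹∫₀¹ (uv)^{-1/p} ω(f;u,v)_p (du/u)(dv/v)`. -/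
noncomputable def Ip (p : ℝ) (f : ℝ → ℝ → ℝ) : ℝ≥0∞ :=
  ∫⁻ u in Set.Ioc (0:ℝ) 1, ∫⁻ v in Set.Ioc (0:ℝ) 1,
    ENNReal.ofReal ((u * v) ^ (-(1/p)) / (u * v)) * mixedModulus p f u v

/-- The essential supremum norm of `f` over `[0,1]^2`. -/
noncomputable def supNorm2 (f : ℝ → ℝ → ℝ) : ℝ≥0∞ :=
  essSup (fun z : ℝ × ℝ => ENNReal.ofReal |f z.1 z.2|)
    (volume.restrict ((Set.Icc (0:ℝ) 1) ×ˢ (Set.Icc (0:ℝ) 1)))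

/-- The Wiener `p`-variation of a 1-periodic function `g`, as a value in `[0,∞]`:
the supremum over partitions `x₀ < x₁ < ... < xₙ = x₀ + 1` of
`(∑ |g(x_{k+1}) - g(x_k)|^p)^{1/p}`. -/
noncomputable def vp (p : ℝ) (g : ℝ → ℝ) : ℝ≥0∞ :=
  ⨆ (n : ℕ) (x : ℕ → ℝ) (_ : ∀ i < n, x i < x (i + 1)) (_ : x n = x 0 + 1),
    ENNReal.ofReal ((∑ k ∈ Finset.range n, |g (x (k + 1)) - g (x k)| ^ p) ^ (1 / p))

/-- The Hardy–Vitali type total `p`-variation of a bivariate function,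
as a value in `[0,∞]`: the supremum over nets of
`(∑∑ |Δf(x_i,y_j)|^p)^{1/p}`. -/
noncomputable def vp2 (p : ℝ) (f : ℝ → ℝ → ℝ) : ℝ≥0∞ :=
  ⨆ (m : ℕ) (n : ℕ) (x : ℕ → ℝ) (y : ℕ → ℝ)
    (_ : ∀ i < m, x i < x (i + 1)) (_ : x m = x 0 + 1)
    (_ : ∀ j < n, y j < y (j + 1)) (_ : y n = y 0 + 1),
    ENNReal.ofReal ((∑ i ∈ Finset.range m, ∑ j ∈ Finset.range n,
      |f (x (i + 1)) (y (j + 1)) - f (x (i + 1)) (y j)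
        - f (x i) (y (j + 1)) + f (x i) (y j)| ^ p) ^ (1 / p))

/-- Membership in the Hardy class `H_p^{(2)}`: finite Vitali `p`-variation and
all linear sections of bounded `p`-variation. -/
def MemHp2 (p : ℝ) (f : ℝ → ℝ → ℝ) : Prop :=
  vp2 p f < ⊤ ∧ (∀ x, vp p (fun y => f x y) < ⊤) ∧ (∀ y, vp p (fun x => f x y) < ⊤)

/-- Membership in the mixed norm class `V_p[V_p]`: all sections have bounded
`p`-variation and the functions `x ↦ v_p(f_x)`, `y ↦ v_p(f_y)` are themselves
of bounded `p`-variation. -/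
def MemVpVp (p : ℝ) (f : ℝ → ℝ → ℝ) : Prop :=
  (∀ x, vp p (fun y => f x y) < ⊤) ∧ (∀ y, vp p (fun x => f x y) < ⊤) ∧
  vp p (fun x => (vp p (fun y => f x y)).toReal) < ⊤ ∧
  vp p (fun y => (vp p (fun x => f x y)).toReal) < ⊤

/-- `W_p(f) = v_p(φ_p[f]) + v_p(ψ_p[f])`, where `φ_p[f](x) = v_p(f_x)` and
`ψ_p[f](y) = v_p(f_y)`. -/
noncomputable def Wp (p : ℝ) (f : ℝ → ℝ → ℝ) : ℝ≥0∞ :=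
  vp p (fun x => (vp p (fun y => f x y)).toReal)
    + vp p (fun y => (vp p (fun x => f x y)).toReal)

/-- Membership in `L^p_0([0,1]^2)`: membership in `L^p([0,1]^2)` together with
vanishing of the linear mean values `∫₀¹ f(x,t) dt` and `∫₀¹ f(t,y) dt` for a.e.
`x` resp. `y`. -/
def MemLp20 (p : ℝ) (f : ℝ → ℝ → ℝ) : Prop :=
  MemLp2 p f ∧ (∀ᵐ x : ℝ ∂volume, ∫ t in (0:ℝ)..1, f x t = 0) ∧
    (∀ᵐ y : ℝ ∂volume, ∫ t in (0:ℝ)..1, f t y = 0)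

/-- `T` is a trigonometric polynomial of degree `(n,m)` in two variables. -/
def IsTrigPoly2 (n m : ℕ) (T : ℝ → ℝ → ℝ) : Prop :=
  ∃ a b c d : ℕ → ℕ → ℝ, ∀ x y : ℝ,
    T x y = ∑ j ∈ Finset.range (n + 1), ∑ k ∈ Finset.range (m + 1),
      (a j k * Real.cos (2 * Real.pi * j * x) * Real.cos (2 * Real.pi * k * y)
        + b j k * Real.cos (2 * Real.pi * j * x) * Real.sin (2 * Real.pi * k * y)
        + c j k * Real.sin (2 * Real.pi * j * x) * Real.cos (2 * Real.pi * k * y)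
        + d j k * Real.sin (2 * Real.pi * j * x) * Real.sin (2 * Real.pi * k * y))

end
/-!
For a continuous periodic `g`, the telescoping sum of differences of Steklov means of steps
`h_k → 0` represents `g` up to a constant, the mean over a full period. The `p`-variation of each
difference is controlled by `|b - a|^p ≤ 2^(p-1) |sgn(b)|b|^p - sgn(a)|a|^p|`, the fundamental
theorem of calculus and Hölder's inequality. With steps `2^(-pk)` for `p ≥ 2` and `2^(-p'k)` for
`p < 2`, the series is dominated by `ω(g;1)_p + (1/(pp')) ∫ t^(-1/p) ω(g;t)_p dt/t`, up to an
absolute constant.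

The argument works verbatim for families of functions in `ℓ^p` or `L^p` norm. Applied first to the
increments of `f` in one variable and then to the shifts in the other, it bounds `W_p(f)` for
continuous `f`; single increments also bound the oscillation of `f`. Mollification does not increase
the moduli of continuity, so by dominated convergence the mollified functions are uniformly Cauchy,
and their limit is the continuous representative.
-/


noncomputable section

/-! ### Signed powers -/

/-- The signed power `u ↦ sgn(u) |u|^p`, an odd primitive of `p |u|^(p-1)`. It is the function whose
increments dominate the `p`-th powers of increments. -/
def signedPow (p u : ℝ) : ℝ := u * |u| ^ (p - 1)

lemma signedPow_of_nonneg {p u : ℝ} (hp : p ≠ 0) (hu : 0 ≤ u) : signedPow p u = u ^ p := by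
  rw [signedPow, abs_of_nonneg hu, mul_comm, ← Real.rpow_add_one' hu (by simpa using hp),
    sub_add_cancel]

lemma signedPow_neg (p u : ℝ) : signedPow p (-u) = -signedPow p u := by
  rw [signedPow, signedPow, abs_neg, neg_mul]

lemma hasDerivAt_signedPow {p : ℝ} (hp : 1 < p) (u : ℝ) :
    HasDerivAt (signedPow p) (p * |u| ^ (p - 1)) u := by
  rcases eq_or_ne u 0 with rfl | hu
  · have slope_lim : Tendsto (fun u : ℝ => |u| ^ (p - 1)) (nhdsWithin 0 {0}ᶜ) (nhds 0) := by
      have hcont : Continuous fun u : ℝ => |u| ^ (p - 1) :=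
        continuous_abs.rpow_const fun _ => Or.inr (by linarith)
      simpa [Real.zero_rpow (sub_pos.2 hp).ne'] using (hcont.tendsto 0).mono_left nhdsWithin_le_nhds
    rw [abs_zero, Real.zero_rpow (sub_pos.2 hp).ne', mul_zero, hasDerivAt_iff_tendsto_slope]
    refine slope_lim.congr' ?_
    filter_upwards [self_mem_nhdsWithin] with v hv
    simp [slope, signedPow, inv_mul_cancel_left₀ hv]
  · have hpow := (hasDerivAt_id u).mul ((hasDerivAt_abs hu).rpow_const (p := p - 1)
      (Or.inl (abs_ne_zero.2 hu)))
    refine hpow.congr_deriv ?_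
    have hself : u * SignType.sign u = |u| := by rw [mul_comm, sign_mul_self]
    rw [Real.rpow_sub_one (abs_ne_zero.2 hu) (p - 1)]
    simp only [id_eq]
    field_simp
    linear_combination (p - 1) * hself

lemma sub_rpow_le_signedPow_sub {p a b : ℝ} (hp : 1 ≤ p) (hab : a ≤ b) :
    (b - a) ^ p ≤ 2 ^ (p - 1) * (signedPow p b - signedPow p a) := by
  have hp0 : p ≠ 0 := by linarith
  have same_sign : ∀ {c d : ℝ}, 0 ≤ c → c ≤ d →
      (d - c) ^ p ≤ 2 ^ (p - 1) * (signedPow p d - signedPow p c) := by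
    intro c d hc hcd
    have hsuper := Real.add_rpow_le_rpow_add (sub_nonneg.2 hcd) hc hp
    rw [sub_add_cancel] at hsuper
    rw [signedPow_of_nonneg hp0 hc, signedPow_of_nonneg hp0 (hc.trans hcd)]
    have htwo : (1 : ℝ) ≤ 2 ^ (p - 1) := Real.one_le_rpow (by norm_num) (by linarith)
    have hnonneg : 0 ≤ (d - c) ^ p := Real.rpow_nonneg (sub_nonneg.2 hcd) _
    nlinarith
  rcases le_total 0 a with ha | ha
  · exact same_sign ha hab
  rcases le_total b 0 with hb | hb
  · have hneg := same_sign (neg_nonneg.2 hb) (neg_le_neg hab)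
    simp only [signedPow_neg, neg_sub_neg] at hneg
    exact hneg
  · have hconv : (b + -a) ^ p ≤ 2 ^ (p - 1) * (b ^ p + (-a) ^ p) := by
      exact_mod_cast NNReal.rpow_add_le_mul_rpow_add_rpow ⟨b, hb⟩ ⟨-a, neg_nonneg.2 ha⟩ hp
    rwa [← signedPow_of_nonneg hp0 hb, ← signedPow_of_nonneg hp0 (neg_nonneg.2 ha), signedPow_neg,
      ← sub_eq_add_neg, ← sub_eq_add_neg] at hconv

lemma abs_sub_rpow_le_signedPow_sub {p : ℝ} (hp : 1 ≤ p) (a b : ℝ) :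
    |b - a| ^ p ≤ 2 ^ (p - 1) * |signedPow p b - signedPow p a| := by
  wlog hab : a ≤ b generalizing a b
  · rw [abs_sub_comm, abs_sub_comm (signedPow p b)]
    exact this b a (le_of_not_ge hab)
  rw [abs_of_nonneg (sub_nonneg.2 hab)]
  refine (sub_rpow_le_signedPow_sub hp hab).trans ?_
  gcongr
  exact le_abs_self _

lemma ofReal_abs_rpow {p : ℝ} (hp : 0 ≤ p) (x : ℝ) : ENNReal.ofReal (|x| ^ p) = ‖x‖ₑ ^ p := by
  rw [← ENNReal.ofReal_rpow_of_nonneg (abs_nonneg x) hp, Real.enorm_eq_ofReal_abs]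

lemma enorm_sub_rpow_le_lintegral {p : ℝ} (hp : 1 < p) {H H' : ℝ → ℝ}
    (hderiv : ∀ x, HasDerivAt H (H' x) x) (hcont : Continuous H') {a b : ℝ} (hab : a ≤ b) :
    ‖H b - H a‖ₑ ^ p ≤
      ENNReal.ofReal (2 ^ (p - 1) * p) * ∫⁻ t in Ioc a b, ‖H t‖ₑ ^ (p - 1) * ‖H' t‖ₑ := by
  have hp0 : 0 ≤ p := by linarith
  have hH : Continuous H := continuous_iff_continuousAt.2 fun x => (hderiv x).continuousAt
  have hcont' : Continuous fun t => p * |H t| ^ (p - 1) * H' t :=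
    (continuous_const.mul (hH.abs.rpow_const fun _ => Or.inr (by linarith))).mul hcont
  have ftc : ∫ t in a..b, p * |H t| ^ (p - 1) * H' t = signedPow p (H b) - signedPow p (H a) :=
    intervalIntegral.integral_eq_sub_of_hasDerivAt
      (fun x _ => (hasDerivAt_signedPow hp (H x)).comp x (hderiv x))
      (hcont'.intervalIntegrable _ _)
  calc ‖H b - H a‖ₑ ^ p
      ≤ ENNReal.ofReal (2 ^ (p - 1) * |signedPow p (H b) - signedPow p (H a)|) := by
        rw [← ofReal_abs_rpow hp0]
        exact ENNReal.ofReal_le_ofReal (abs_sub_rpow_le_signedPow_sub hp.le _ _)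
    _ = ENNReal.ofReal (2 ^ (p - 1)) * ‖∫ t in Ioc a b, p * |H t| ^ (p - 1) * H' t‖ₑ := by
        rw [ENNReal.ofReal_mul (by positivity), ← Real.enorm_eq_ofReal_abs, ← ftc,
          intervalIntegral.integral_of_le hab]
    _ ≤ ENNReal.ofReal (2 ^ (p - 1)) * ∫⁻ t in Ioc a b, ‖p * |H t| ^ (p - 1) * H' t‖ₑ := by
        gcongr
        exact enorm_integral_le_lintegral_enorm _
    _ = _ := by
        rw [ENNReal.ofReal_mul (by positivity), mul_assoc, ← lintegral_const_mul' (.ofReal p) _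
          ENNReal.ofReal_ne_top]
        simp only [enorm_mul, mul_assoc, Real.enorm_eq_ofReal hp0,
          ← ofReal_abs_rpow (sub_pos.2 hp).le,
          Real.enorm_eq_ofReal (Real.rpow_nonneg (abs_nonneg _) _)]

lemma sum_enorm_sub_rpow_le_lintegral {p : ℝ} (hp : 1 < p) {H H' : ℝ → ℝ}
    (hderiv : ∀ x, HasDerivAt H (H' x) x) (hcont : Continuous H') {n : ℕ} {x : ℕ → ℝ}
    (hx : MonotoneOn x (Iic n)) :
    ∑ j ∈ Finset.range n, ‖H (x (j + 1)) - H (x j)‖ₑ ^ p ≤ ENNReal.ofReal (2 ^ (p - 1) * p) *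
      ∫⁻ t in Ioc (x 0) (x n), ‖H t‖ₑ ^ (p - 1) * ‖H' t‖ₑ := by
  induction n with
  | zero => simp
  | succ n ih =>
    have hfirst : x 0 ≤ x n :=
      hx (mem_Iic.2 (Nat.zero_le _)) (mem_Iic.2 n.le_succ) (Nat.zero_le _)
    have hlast : x n ≤ x (n + 1) := hx (mem_Iic.2 n.le_succ) (mem_Iic.2 le_rfl) n.le_succ
    rw [Finset.sum_range_succ, ← Ioc_union_Ioc_eq_Ioc hfirst hlast,
      lintegral_union measurableSet_Ioc (Ioc_disjoint_Ioc_of_le le_rfl), mul_add]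
    exact add_le_add (ih (hx.mono (Iic_subset_Iic.2 n.le_succ)))
      (enorm_sub_rpow_le_lintegral hp hderiv hcont hlast)

/-! ### Periodic integrals and `L^p` norms -/

/-- Lebesgue measure on the unit interval. The half-open interval is a fundamental domain for
the integer translations. -/
abbrev unitMeasure : Measure ℝ := volume.restrict (Ioc (0 : ℝ) 1)

instance isProbabilityMeasure_unitMeasure : IsProbabilityMeasure unitMeasure := ⟨by simp⟩

lemma setLIntegral_Ioc_add_one_of_periodic {φ : ℝ → ℝ≥0∞} (hφ : Function.Periodic φ 1) (a : ℝ) :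
    ∫⁻ x in Ioc a (a + 1), φ x = ∫⁻ x, φ x ∂unitMeasure := by
  have hdomain := (isAddFundamentalDomain_Ioc (T := (1 : ℝ)) zero_lt_one a).setLIntegral_eq
    (isAddFundamentalDomain_Ioc zero_lt_one 0) φ hφ.map_vadd_zmultiples
  rwa [zero_add] at hdomain

lemma lintegral_unitMeasure_add_right {φ : ℝ → ℝ≥0∞} (hφ : Function.Periodic φ 1) (a : ℝ) :
    ∫⁻ x, φ (x + a) ∂unitMeasure = ∫⁻ x, φ x ∂unitMeasure := by
  rw [← setLIntegral_Ioc_add_one_of_periodic hφ a,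
    ← (measurePreserving_add_right volume a).setLIntegral_comp_preimage_emb
      (measurableEmbedding_addRight a) φ (Ioc a (a + 1))]
  simp

section LpNorm

variable {Z Y : Type*} [MeasurableSpace Z] [MeasurableSpace Y] {ν : Measure Z} {ρ : Measure Y}
  {p : ℝ}

lemma eLpNorm_ofReal_rpow (hp : 0 < p) (F : Z → ℝ) :
    eLpNorm F (ENNReal.ofReal p) ν ^ p = ∫⁻ z, ‖F z‖ₑ ^ p ∂ν := by
  rw [eLpNorm_eq_lintegral_rpow_enorm_toReal (by simpa using hp) ENNReal.ofReal_ne_top,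
    ENNReal.toReal_ofReal hp.le, ← ENNReal.rpow_mul, one_div_mul_cancel hp.ne', ENNReal.rpow_one]

lemma rpow_lintegral_le_lintegral_rpow [IsProbabilityMeasure ρ] (hp : 1 ≤ p) {φ : Y → ℝ≥0∞}
    (hφ : Measurable φ) : (∫⁻ y, φ y ∂ρ) ^ p ≤ ∫⁻ y, φ y ^ p ∂ρ := by
  have hp0 : 0 < p := by linarith
  have hmono : ∫⁻ y, φ y ∂ρ ≤ (∫⁻ y, φ y ^ p ∂ρ) ^ (1 / p) := by
    simpa [eLpNorm'_eq_lintegral_enorm] using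
      eLpNorm'_le_eLpNorm'_of_exponent_le one_pos hp ρ hφ.aestronglyMeasurable
  rwa [one_div, ENNReal.le_rpow_inv_iff hp0] at hmono

lemma eLpNorm_le_of_enorm_le_lintegral [SFinite ν] [IsProbabilityMeasure ρ] (hp : 1 ≤ p)
    {F : Z → ℝ} {D : Z → Y → ℝ} (hD : Measurable (Function.uncurry D)) {C : ℝ≥0∞}
    (hF : ∀ z, ‖F z‖ₑ ≤ ∫⁻ y, ‖D z y‖ₑ ∂ρ)
    (hC : ∀ᵐ y ∂ρ, eLpNorm (fun z => D z y) (ENNReal.ofReal p) ν ≤ C) :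
    eLpNorm F (ENNReal.ofReal p) ν ≤ C := by
  have hp0 : 0 < p := by linarith
  rw [← ENNReal.rpow_le_rpow_iff hp0, eLpNorm_ofReal_rpow hp0]
  calc ∫⁻ z, ‖F z‖ₑ ^ p ∂ν ≤ ∫⁻ z, ∫⁻ y, ‖D z y‖ₑ ^ p ∂ρ ∂ν := lintegral_mono fun z =>
        (ENNReal.rpow_le_rpow (hF z) hp0.le).trans (rpow_lintegral_le_lintegral_rpow hp
          (hD.comp measurable_prodMk_left).enorm)
    _ = ∫⁻ y, ∫⁻ z, ‖D z y‖ₑ ^ p ∂ν ∂ρ :=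
        lintegral_lintegral_swap (hD.enorm.pow_const p).aemeasurable
    _ ≤ ∫⁻ _, C ^ p ∂ρ := by
        refine lintegral_mono_ae ?_
        filter_upwards [hC] with y hy
        rw [← eLpNorm_ofReal_rpow hp0]
        exact ENNReal.rpow_le_rpow hy hp0.le
    _ = C ^ p := by simp

lemma le_rpow_lintegral_add_of_forall_le [IsProbabilityMeasure ρ] (hp : 0 < p) {g : Y → ℝ≥0∞}
    {A C : ℝ≥0∞} (h : ∀ y, A ≤ g y + C) : A ≤ (∫⁻ y, g y ^ p ∂ρ) ^ (1 / p) + C := by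
  rw [← tsub_le_iff_right]
  calc A - C = (∫⁻ _, (A - C) ^ p ∂ρ) ^ (1 / p) := by
        rw [lintegral_const, measure_univ, mul_one, ← ENNReal.rpow_mul,
          mul_one_div_cancel hp.ne', ENNReal.rpow_one]
    _ ≤ _ := by
        gcongr with y
        exact tsub_le_iff_right.2 (h y)

end LpNorm

/-! ### Families of periodic functions -/

section Family

variable {α : Type*} [MeasurableSpace α] {μ : Measure α} {p : ℝ} {G F : α → ℝ → ℝ}

/-- The `L^p` norm of a family `G a`, `a ∈ α`, of functions on the unit interval, as a function of
both variables. Taking the index `a` in a general measure space makes the one-variable theory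
vector-valued: `α = ℝ` and `α = Fin m` with counting measure are both used. -/
def familyNorm (μ : Measure α) (p : ℝ) (G : α → ℝ → ℝ) : ℝ≥0∞ :=
  eLpNorm (Function.uncurry G) (ENNReal.ofReal p) (μ.prod unitMeasure)

/-- The `L^p` modulus of continuity of a family, with respect to its real variable. -/
def familyModulus (μ : Measure α) (p : ℝ) (G : α → ℝ → ℝ) (t : ℝ) : ℝ≥0∞ :=
  ⨆ (k : ℝ) (_ : k ∈ Icc 0 t), familyNorm μ p fun a x => G a (x + k) - G a x

/-- A jointly measurable family of continuous functions of period one. -/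
structure PeriodicFamily (G : α → ℝ → ℝ) : Prop where
  measurable : Measurable (Function.uncurry G)
  continuous : ∀ a, Continuous (G a)
  periodic : ∀ a, Function.Periodic (G a) 1

lemma familyNorm_add_le (hp : 1 ≤ p) (hG : Measurable (Function.uncurry G))
    (hF : Measurable (Function.uncurry F)) :
    familyNorm μ p (fun a x => G a x + F a x) ≤ familyNorm μ p G + familyNorm μ p F :=
  eLpNorm_add_le hG.aestronglyMeasurable hF.aestronglyMeasurable (by simpa using hp)

lemma familyNorm_sub_le (hp : 1 ≤ p) (hG : Measurable (Function.uncurry G))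
    (hF : Measurable (Function.uncurry F)) :
    familyNorm μ p (fun a x => G a x - F a x) ≤ familyNorm μ p G + familyNorm μ p F :=
  eLpNorm_sub_le hG.aestronglyMeasurable hF.aestronglyMeasurable (by simpa using hp)

lemma familyNorm_const_mul (c : ℝ) :
    familyNorm μ p (fun a x => c * G a x) = ‖c‖ₑ * familyNorm μ p G :=
  eLpNorm_const_smul c (Function.uncurry G) _ _

lemma familyNorm_rpow (hp : 0 < p) (hG : Measurable (Function.uncurry G)) :
    familyNorm μ p G ^ p = ∫⁻ a, ∫⁻ x, ‖G a x‖ₑ ^ p ∂unitMeasure ∂μ := by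
  rw [familyNorm, eLpNorm_ofReal_rpow hp, lintegral_prod _ (hG.enorm.pow_const p).aemeasurable]
  rfl

lemma measurable_uncurry_add_const (hG : Measurable (Function.uncurry G)) (k : ℝ) :
    Measurable (Function.uncurry fun a x => G a (x + k)) :=
  hG.comp (measurable_fst.prodMk (measurable_snd.add_const k))

lemma familyNorm_translate (hp : 0 < p) (hG : Measurable (Function.uncurry G))
    (hper : ∀ a, Function.Periodic (G a) 1) (k : ℝ) :
    familyNorm μ p (fun a x => G a (x + k)) = familyNorm μ p G := by
  refine ENNReal.rpow_left_injective hp.ne' ?_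
  change _ ^ p = _ ^ p
  rw [familyNorm_rpow hp (measurable_uncurry_add_const hG k), familyNorm_rpow hp hG]
  congr 1 with a
  exact lintegral_unitMeasure_add_right ((hper a).comp fun v => ‖v‖ₑ ^ p) k

lemma familyNorm_le_familyModulus {k t : ℝ} (hk : k ∈ Icc 0 t) :
    familyNorm μ p (fun a x => G a (x + k) - G a x) ≤ familyModulus μ p G t :=
  le_iSup₂ (f := fun k (_ : k ∈ Icc 0 t) => familyNorm μ p fun a x => G a (x + k) - G a x) k hk

lemma familyModulus_mono : Monotone (familyModulus μ p G) := fun _ _ hst =>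
  iSup₂_le fun _ hk => familyNorm_le_familyModulus ⟨hk.1, hk.2.trans hst⟩

lemma familyModulus_add_le (hp : 1 ≤ p) (hG : Measurable (Function.uncurry G))
    (hper : ∀ a, Function.Periodic (G a) 1) {s t : ℝ} (hs : 0 ≤ s) (ht : 0 ≤ t) :
    familyModulus μ p G (s + t) ≤ familyModulus μ p G s + familyModulus μ p G t := by
  refine iSup₂_le fun k hk => ?_
  obtain ⟨a, b, ha, hb, rfl⟩ : ∃ a b, a ∈ Icc 0 s ∧ b ∈ Icc 0 t ∧ k = a + b := by
    rcases le_total k s with h | h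
    · exact ⟨k, 0, ⟨hk.1, h⟩, ⟨le_rfl, ht⟩, (add_zero k).symm⟩
    · exact ⟨s, k - s, ⟨hs, le_rfl⟩, ⟨by linarith, by linarith [hk.2]⟩, by ring⟩
  have hdiff (k : ℝ) : Measurable (Function.uncurry fun c x => G c (x + k) - G c x) :=
    (measurable_uncurry_add_const hG k).sub hG
  have hdiff_per (c : α) : Function.Periodic (fun x => G c (x + a) - G c x) 1 :=
    ((hper c).add_const a).sub (hper c)
  calc familyNorm μ p (fun c x => G c (x + (a + b)) - G c x)
      = familyNorm μ p (fun c x => (G c (x + b + a) - G c (x + b)) + (G c (x + b) - G c x)) := by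
        simp only [sub_add_sub_cancel, add_assoc, add_comm b a]
    _ ≤ familyNorm μ p (fun c x => G c (x + b + a) - G c (x + b)) +
          familyNorm μ p (fun c x => G c (x + b) - G c x) :=
        familyNorm_add_le hp (measurable_uncurry_add_const (hdiff a) b) (hdiff b)
    _ = familyNorm μ p (fun c x => G c (x + a) - G c x) +
          familyNorm μ p (fun c x => G c (x + b) - G c x) := by
        rw [familyNorm_translate (by linarith) (hdiff a) hdiff_per b]
    _ ≤ _ := add_le_add (familyNorm_le_familyModulus ha) (familyNorm_le_familyModulus hb)

lemma familyModulus_natCast_mul_le (hp : 1 ≤ p) (hG : Measurable (Function.uncurry G))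
    (hper : ∀ a, Function.Periodic (G a) 1) {s : ℝ} (hs : 0 ≤ s) (n : ℕ) :
    familyModulus μ p G ((n + 1) * s) ≤ (n + 1) * familyModulus μ p G s := by
  induction n with
  | zero => simp
  | succ n ih =>
    have hsplit : ((n + 1 : ℕ) + 1) * s = (n + 1) * s + s := by push_cast; ring
    rw [hsplit]
    refine (familyModulus_add_le hp hG hper (by positivity) hs).trans ?_
    push_cast
    rw [add_mul ((n : ℝ≥0∞) + 1), one_mul]
    gcongr

lemma familyModulus_le_ofReal_mul (hp : 1 ≤ p) (hG : Measurable (Function.uncurry G))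
    (hper : ∀ a, Function.Periodic (G a) 1) {s t : ℝ} (hs : 0 < s) (hst : s ≤ t) :
    familyModulus μ p G t ≤ ENNReal.ofReal (2 * (t / s)) * familyModulus μ p G s := by
  have hone : 1 ≤ t / s := (one_le_div hs).2 hst
  have hfloor := Nat.floor_le (zero_le_one.trans hone)
  calc familyModulus μ p G t ≤ familyModulus μ p G ((⌊t / s⌋₊ + 1) * s) :=
        familyModulus_mono ((div_le_iff₀ hs).1 (Nat.lt_floor_add_one (t / s)).le)
    _ ≤ (⌊t / s⌋₊ + 1) * familyModulus μ p G s :=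
        familyModulus_natCast_mul_le hp hG hper hs.le _
    _ ≤ _ := by
        gcongr
        rw [← ENNReal.ofReal_natCast, ← ENNReal.ofReal_one,
          ← ENNReal.ofReal_add (by positivity) zero_le_one]
        exact ENNReal.ofReal_le_ofReal (by linarith)

namespace PeriodicFamily

lemma translate (hG : PeriodicFamily G) (k : ℝ) : PeriodicFamily fun a x => G a (x + k) where
  measurable := measurable_uncurry_add_const hG.measurable k
  continuous a := (hG.continuous a).comp (continuous_id.add continuous_const)
  periodic a := (hG.periodic a).add_const k

lemma sub (hG : PeriodicFamily G) (hF : PeriodicFamily F) :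
    PeriodicFamily fun a x => G a x - F a x where
  measurable := hG.measurable.sub hF.measurable
  continuous a := (hG.continuous a).sub (hF.continuous a)
  periodic a := (hG.periodic a).sub (hF.periodic a)

lemma const_mul (hG : PeriodicFamily G) (c : ℝ) : PeriodicFamily fun a x => c * G a x where
  measurable := hG.measurable.const_mul c
  continuous a := (hG.continuous a).const_mul c
  periodic a := (hG.periodic a).comp (c * ·)

end PeriodicFamily

end Family

/-! ### Steklov means -/

/-- The Steklov mean of `g` over `[x, x + h]`, written as an integral over the unit interval. -/
def steklov (h : ℝ) (g : ℝ → ℝ) (x : ℝ) : ℝ := ∫ u, g (x + h * u) ∂unitMeasure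

section Steklov

variable {g : ℝ → ℝ} {h : ℝ}

lemma steklov_eq_intervalIntegral (hh : h ≠ 0) (x : ℝ) :
    steklov h g x = h⁻¹ * ∫ u in x..(x + h), g u := by
  rw [steklov, unitMeasure, ← intervalIntegral.integral_of_le zero_le_one,
    intervalIntegral.integral_comp_add_mul g hh x]
  simp

lemma hasDerivAt_steklov (hg : Continuous g) (hh : h ≠ 0) (x : ℝ) :
    HasDerivAt (steklov h g) (h⁻¹ * (g (x + h) - g x)) x := by
  have heq : steklov h g =
      fun x => h⁻¹ * ((∫ u in (0 : ℝ)..(x + h), g u) - ∫ u in (0 : ℝ)..x, g u) := by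
    ext x
    rw [steklov_eq_intervalIntegral hh, intervalIntegral.integral_interval_sub_left] <;>
      exact hg.intervalIntegrable _ _
  rw [heq]
  have hprim (y : ℝ) : HasDerivAt (fun y => ∫ u in (0 : ℝ)..y, g u) (g y) y :=
    (hg.integral_hasStrictDerivAt 0 y).hasDerivAt
  exact (((hprim (x + h)).comp_add_const x h).sub (hprim x)).const_mul _

lemma steklov_one_eq (hg : Function.Periodic g 1) (x y : ℝ) : steklov 1 g x = steklov 1 g y := by
  rw [steklov_eq_intervalIntegral one_ne_zero, steklov_eq_intervalIntegral one_ne_zero,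
    hg.intervalIntegral_add_eq x y]

lemma steklov_sub_self (hg : Continuous g) (x : ℝ) :
    steklov h g x - g x = ∫ u, (g (x + h * u) - g x) ∂unitMeasure := by
  have hint : IntegrableOn (fun u => g (x + h * u)) (Ioc 0 1) :=
    (hg.comp (by fun_prop)).integrableOn_Ioc
  rw [integral_sub hint (integrable_const _), integral_const, probReal_univ, one_smul, steklov]

lemma tendsto_steklov (hg : Continuous g) (x : ℝ) {h : ℕ → ℝ} (hpos : ∀ k, 0 < h k)
    (hlim : Tendsto h atTop (nhds 0)) :
    Tendsto (fun k => steklov (h k) g x) atTop (nhds (g x)) := by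
  have hprim := (hg.integral_hasStrictDerivAt x x).hasDerivAt
  rw [hasDerivAt_iff_tendsto_slope_zero] at hprim
  have hlim' : Tendsto h atTop (nhdsWithin 0 {0}ᶜ) :=
    tendsto_nhdsWithin_iff.2 ⟨hlim, Eventually.of_forall fun k => (hpos k).ne'⟩
  refine (hprim.comp hlim').congr fun k => ?_
  simp [steklov_eq_intervalIntegral (hpos k).ne' x]

end Steklov

section FamilySteklov

variable {α : Type*} [MeasurableSpace α] {μ : Measure α} {p h h' : ℝ} {G : α → ℝ → ℝ}

lemma PeriodicFamily.steklov (hG : PeriodicFamily G) (hh : h ≠ 0) :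
    PeriodicFamily fun a => steklov h (G a) where
  measurable := by
    have hmeas : Measurable fun q : (α × ℝ) × ℝ => G q.1.1 (q.1.2 + h * q.2) :=
      hG.measurable.comp (by fun_prop : Measurable fun q : (α × ℝ) × ℝ => (q.1.1, q.1.2 + h * q.2))
    exact (hmeas.stronglyMeasurable.integral_prod_right' (ν := unitMeasure)).measurable
  continuous a := continuous_iff_continuousAt.2 fun x =>
    (hasDerivAt_steklov (hG.continuous a) hh x).continuousAt
  periodic a x := by
    unfold _root_.steklov
    congr 1 with u
    rw [add_right_comm, hG.periodic]

lemma familyNorm_steklov_sub_self_le [SFinite μ] (hp : 1 ≤ p) (hG : PeriodicFamily G)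
    (hh : 0 ≤ h) :
    familyNorm μ p (fun a x => steklov h (G a) x - G a x) ≤ familyModulus μ p G h := by
  refine eLpNorm_le_of_enorm_le_lintegral (ρ := unitMeasure)
    (D := fun z u => G z.1 (z.2 + h * u) - G z.1 z.2) hp ?_ (fun ⟨a, x⟩ => ?_) ?_
  · exact (hG.measurable.comp (by fun_prop : Measurable fun q : (α × ℝ) × ℝ =>
      (q.1.1, q.1.2 + h * q.2))).sub (hG.measurable.comp measurable_fst)
  · rw [Function.uncurry_apply_pair, steklov_sub_self (hG.continuous a)]
    exact enorm_integral_le_lintegral_enorm _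
  · filter_upwards [ae_restrict_mem measurableSet_Ioc] with u hu
    exact familyNorm_le_familyModulus (G := G) (k := h * u)
      ⟨mul_nonneg hh hu.1.le, mul_le_of_le_one_right hh hu.2⟩

lemma familyNorm_steklov_sub_le [SFinite μ] (hp : 1 ≤ p) (hG : PeriodicFamily G) (hh' : 0 < h')
    (hle : h' ≤ h) :
    familyNorm μ p (fun a y => steklov h' (G a) y - steklov h (G a) y) ≤
      2 * familyModulus μ p G h := by
  have hh : 0 < h := hh'.trans_le hle
  have hthrough : (fun a y => steklov h' (G a) y - steklov h (G a) y) =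
      fun a y => (steklov h' (G a) y - G a y) - (steklov h (G a) y - G a y) := by
    simp only [sub_sub_sub_cancel_right]
  rw [hthrough, two_mul]
  refine (familyNorm_sub_le hp ((hG.steklov hh'.ne').sub hG).measurable
    ((hG.steklov hh.ne').sub hG).measurable).trans ?_
  exact add_le_add ((familyNorm_steklov_sub_self_le hp hG hh'.le).trans (familyModulus_mono hle))
    (familyNorm_steklov_sub_self_le hp hG hh.le)

lemma familyNorm_quotient_sub_le (hp : 1 ≤ p) (hG : PeriodicFamily G) (hh' : 0 < h')
    (hle : h' ≤ h) :
    familyNorm μ p (fun a y => h'⁻¹ * (G a (y + h') - G a y) - h⁻¹ * (G a (y + h) - G a y)) ≤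
      3 * (ENNReal.ofReal (1 / h') * familyModulus μ p G h') := by
  have hh : 0 < h := hh'.trans_le hle
  have hquot (k : ℝ) : Measurable (Function.uncurry fun a y => k⁻¹ * (G a (y + k) - G a y)) :=
    (((hG.translate k).sub hG).const_mul _).measurable
  refine (familyNorm_sub_le hp (hquot h') (hquot h)).trans ?_
  rw [familyNorm_const_mul (G := fun a y => G a (y + h') - G a y),
    familyNorm_const_mul (G := fun a y => G a (y + h) - G a y),
    Real.enorm_eq_ofReal (by positivity), Real.enorm_eq_ofReal (by positivity)]
  calc _ ≤ ENNReal.ofReal h'⁻¹ * familyModulus μ p G h' + ENNReal.ofReal h⁻¹ *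
        (ENNReal.ofReal (2 * (h / h')) * familyModulus μ p G h') := by
        gcongr
        · exact familyNorm_le_familyModulus ⟨hh'.le, le_rfl⟩
        · exact (familyNorm_le_familyModulus ⟨hh.le, le_rfl⟩).trans
            (familyModulus_le_ofReal_mul hp hG.measurable hG.periodic hh' hle)
    _ = _ := by
        rw [← mul_assoc (ENNReal.ofReal h⁻¹), ← ENNReal.ofReal_mul (by positivity),
          show h⁻¹ * (2 * (h / h')) = 2 * (1 / h') by field_simp,
          ENNReal.ofReal_mul zero_le_two, ← one_div, ENNReal.ofReal_ofNat]
        ring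

end FamilySteklov

/-! ### Variation sums over partitions -/

/-- The points `y 0, …, y n` form a partition, possibly with repetitions, of a period. Unlike the
strict partitions in `vp`, weak ones can be padded to a prescribed number of points. -/
structure IsPartition (n : ℕ) (y : ℕ → ℝ) : Prop where
  le_succ : ∀ i < n, y i ≤ y (i + 1)
  last : y n = y 0 + 1

lemma IsPartition.monotoneOn {n : ℕ} {y : ℕ → ℝ} (hy : IsPartition n y) :
    MonotoneOn y (Iic n) :=
  monotoneOn_of_le_add_one ordConnected_Iic fun i _ _ hi => hy.le_succ i (Nat.lt_of_succ_le hi)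

/-- The `p`-variation sum of `g` over the points `y 0, …, y n`. -/
def partitionVariation (p : ℝ) (n : ℕ) (y : ℕ → ℝ) (g : ℝ → ℝ) : ℝ≥0∞ :=
  (∑ j ∈ Finset.range n, ‖g (y (j + 1)) - g (y j)‖ₑ ^ p) ^ (1 / p)

lemma partitionVariation_rpow {p : ℝ} (hp : 0 < p) (n : ℕ) (y : ℕ → ℝ) (g : ℝ → ℝ) :
    partitionVariation p n y g ^ p = ∑ j ∈ Finset.range n, ‖g (y (j + 1)) - g (y j)‖ₑ ^ p := by
  rw [partitionVariation, ← ENNReal.rpow_mul, one_div_mul_cancel hp.ne', ENNReal.rpow_one]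

section FamilyVariation

variable {α : Type*} [MeasurableSpace α] {μ : Measure α} {p : ℝ} {G F : α → ℝ → ℝ} {n : ℕ}
  {x : α → ℕ → ℝ}

/-- The `L^p(μ)` norm of the variation sums of the functions `G a`, each over its own points `x a`.
It is written as a norm on `α × Fin n`, where Minkowski's inequality and Fatou's lemma apply. -/
def familyVariation (μ : Measure α) (p : ℝ) (n : ℕ) (x : α → ℕ → ℝ) (G : α → ℝ → ℝ) : ℝ≥0∞ :=
  eLpNorm (fun z : α × Fin n => G z.1 (x z.1 (z.2 + 1)) - G z.1 (x z.1 z.2))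
    (ENNReal.ofReal p) (μ.prod Measure.count)

lemma measurable_increments (hG : Measurable (Function.uncurry G))
    (hx : ∀ j, Measurable fun a => x a j) :
    Measurable fun z : α × Fin n => G z.1 (x z.1 (z.2 + 1)) - G z.1 (x z.1 z.2) :=
  measurable_from_prod_countable_left fun j =>
    (hG.comp (measurable_id.prodMk (hx (j + 1)))).sub (hG.comp (measurable_id.prodMk (hx j)))

lemma familyVariation_rpow (hp : 0 < p) (hG : Measurable (Function.uncurry G))
    (hx : ∀ j, Measurable fun a => x a j) :
    familyVariation μ p n x G ^ p = ∫⁻ a, partitionVariation p n (x a) (G a) ^ p ∂μ := by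
  rw [familyVariation, eLpNorm_ofReal_rpow hp,
    lintegral_prod _ ((measurable_increments hG hx).enorm.pow_const p).aemeasurable]
  congr 1 with a
  rw [lintegral_count, tsum_fintype, partitionVariation_rpow hp,
    Finset.sum_range fun j => ‖G a (x a (j + 1)) - G a (x a j)‖ₑ ^ p]

lemma familyVariation_add_le (hp : 1 ≤ p) (hG : Measurable (Function.uncurry G))
    (hF : Measurable (Function.uncurry F)) (hx : ∀ j, Measurable fun a => x a j) :
    familyVariation μ p n x (fun a y => G a y + F a y) ≤
      familyVariation μ p n x G + familyVariation μ p n x F := by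
  refine le_trans (le_of_eq ?_) (eLpNorm_add_le (measurable_increments hG hx).aestronglyMeasurable
    (measurable_increments hF hx).aestronglyMeasurable (by simpa using hp))
  unfold familyVariation
  congr 1 with z
  exact add_sub_add_comm _ _ _ _

lemma familyVariation_const (h : ∀ a y z, G a y = G a z) : familyVariation μ p n x G = 0 := by
  have hzero : (fun z : α × Fin n => G z.1 (x z.1 (z.2 + 1)) - G z.1 (x z.1 z.2)) = 0 :=
    funext fun z => sub_eq_zero.2 (h _ _ _)
  rw [familyVariation, hzero, eLpNorm_zero]

lemma familyVariation_le_liminf {F : ℕ → α → ℝ → ℝ}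
    (hF : ∀ k, Measurable (Function.uncurry (F k))) (hx : ∀ j, Measurable fun a => x a j)
    (hlim : ∀ a y, Tendsto (fun k => F k a y) atTop (nhds (G a y))) :
    familyVariation μ p n x G ≤ liminf (fun k => familyVariation μ p n x (F k)) atTop :=
  Lp.eLpNorm_lim_le_liminf_eLpNorm
    (fun k => (measurable_increments (hF k) hx).aestronglyMeasurable) _
    (Eventually.of_forall fun z => (hlim z.1 _).sub (hlim z.1 _))

lemma lintegral_rpow_sub_one_mul_le_eLpNorm {Z : Type*} [MeasurableSpace Z] {ν : Measure Z}
    (hp : 1 ≤ p) {H H' : Z → ℝ} (hH : Measurable H) (hH' : Measurable H') :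
    ∫⁻ z, ‖H z‖ₑ ^ (p - 1) * ‖H' z‖ₑ ∂ν ≤
      eLpNorm H (ENNReal.ofReal p) ν ^ (p - 1) * eLpNorm H' (ENNReal.ofReal p) ν := by
  have hp0 : 0 < p := by linarith
  have hholder := ENNReal.lintegral_mul_norm_pow_le (μ := ν)
    (f := fun z => ‖H z‖ₑ ^ p) (g := fun z => ‖H' z‖ₑ ^ p)
    (hH.enorm.pow_const p).aemeasurable (hH'.enorm.pow_const p).aemeasurable
    (p := 1 - 1 / p) (q := 1 / p)
    (sub_nonneg.2 ((div_le_one hp0).2 hp)) (by positivity) (by ring)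
  have hexp : p * (1 - 1 / p) = p - 1 := by field_simp
  have hexp' : p * (1 / p) = 1 := by field_simp
  simpa only [← eLpNorm_ofReal_rpow hp0, ← ENNReal.rpow_mul, hexp, hexp', ENNReal.rpow_one]
    using hholder

lemma familyVariation_rpow_le_of_hasDerivAt (hp : 1 < p) {H H' : α → ℝ → ℝ}
    (hH : PeriodicFamily H) (hH' : PeriodicFamily H')
    (hderiv : ∀ a y, HasDerivAt (H a) (H' a y) y) (hmeas : ∀ j, Measurable fun a => x a j)
    (hx : ∀ a, IsPartition n (x a)) :
    familyVariation μ p n x H ^ p ≤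
      ENNReal.ofReal (2 ^ (p - 1) * p) * (familyNorm μ p H ^ (p - 1) * familyNorm μ p H') := by
  have hp0 : 0 < p := by linarith
  have hprod : Measurable fun z : α × ℝ =>
      ‖Function.uncurry H z‖ₑ ^ (p - 1) * ‖Function.uncurry H' z‖ₑ :=
    (hH.measurable.enorm.pow_const _).mul hH'.measurable.enorm
  have hsection (a : α) :
      partitionVariation p n (x a) (H a) ^ p ≤ ENNReal.ofReal (2 ^ (p - 1) * p) *
      ∫⁻ t, ‖H a t‖ₑ ^ (p - 1) * ‖H' a t‖ₑ ∂unitMeasure := by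
    have hper : Function.Periodic (fun t => ‖H a t‖ₑ ^ (p - 1) * ‖H' a t‖ₑ) 1 :=
      ((hH.periodic a).comp fun v => ‖v‖ₑ ^ (p - 1)).mul ((hH'.periodic a).comp fun v => ‖v‖ₑ)
    rw [partitionVariation_rpow hp0, ← setLIntegral_Ioc_add_one_of_periodic hper (x a 0),
      ← (hx a).last]
    exact sum_enorm_sub_rpow_le_lintegral hp (hderiv a) (hH'.continuous a) (hx a).monotoneOn
  calc familyVariation μ p n x H ^ p
      = ∫⁻ a, partitionVariation p n (x a) (H a) ^ p ∂μ :=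
        familyVariation_rpow hp0 hH.measurable hmeas
    _ ≤ ∫⁻ a, ENNReal.ofReal (2 ^ (p - 1) * p) *
          (∫⁻ t, ‖H a t‖ₑ ^ (p - 1) * ‖H' a t‖ₑ ∂unitMeasure) ∂μ := lintegral_mono hsection
    _ = ENNReal.ofReal (2 ^ (p - 1) * p) * ∫⁻ z, ‖Function.uncurry H z‖ₑ ^ (p - 1) *
          ‖Function.uncurry H' z‖ₑ ∂(μ.prod unitMeasure) := by
        rw [lintegral_const_mul' _ _ ENNReal.ofReal_ne_top, lintegral_prod _ hprod.aemeasurable]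
        rfl
    _ ≤ _ := by
        gcongr
        exact lintegral_rpow_sub_one_mul_le_eLpNorm hp.le hH.measurable hH'.measurable

/-- The estimate for the variation of a difference of Steklov means of steps `h' ≤ h`, in terms of
a modulus of continuity `ω`. -/
def steklovTerm (p : ℝ) (ω : ℝ → ℝ≥0∞) (h h' : ℝ) : ℝ≥0∞ :=
  ω h ^ (1 - 1 / p) * (ENNReal.ofReal (1 / h') * ω h') ^ (1 / p)

lemma steklovTerm_rpow (hp : 0 < p) (ω : ℝ → ℝ≥0∞) (h h' : ℝ) :
    steklovTerm p ω h h' ^ p = ω h ^ (p - 1) * (ENNReal.ofReal (1 / h') * ω h') := by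
  have hexp : (1 - 1 / p) * p = p - 1 := by field_simp
  rw [steklovTerm, ENNReal.mul_rpow_of_nonneg _ _ hp.le, ← ENNReal.rpow_mul, ← ENNReal.rpow_mul,
    one_div_mul_cancel hp.ne', ENNReal.rpow_one, hexp]

lemma two_rpow_sub_one_mul_le_twelve_rpow (hp : 1 ≤ p) :
    2 ^ (p - 1) * p * 2 ^ (p - 1) * 3 ≤ (12 : ℝ) ^ p := by
  have hbernoulli : p ≤ 3 ^ p := by
    have h := one_add_mul_self_le_rpow_one_add (s := 2) (by norm_num) hp
    norm_num at h
    linarith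
  have htwelve : (12 : ℝ) ^ p = 2 ^ p * 2 ^ p * 3 ^ p := by
    rw [← Real.mul_rpow, ← Real.mul_rpow] <;> norm_num
  have hpos : (0 : ℝ) < 2 ^ p * 2 ^ p := by positivity
  rw [Real.rpow_sub_one two_ne_zero, htwelve]
  nlinarith

lemma familyVariation_steklov_sub_le [SFinite μ] (hp : 1 < p) (hG : PeriodicFamily G)
    (hmeas : ∀ j, Measurable fun a => x a j) (hx : ∀ a, IsPartition n (x a)) {h h' : ℝ}
    (hh' : 0 < h') (hle : h' ≤ h) :
    familyVariation μ p n x (fun a y => steklov h' (G a) y - steklov h (G a) y) ≤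
      12 * steklovTerm p (familyModulus μ p G) h h' := by
  have hp0 : 0 < p := by linarith
  have hh : 0 < h := hh'.trans_le hle
  have hquot (k : ℝ) : PeriodicFamily fun a y => k⁻¹ * (G a (y + k) - G a y) :=
    ((hG.translate k).sub hG).const_mul _
  have hvar := familyVariation_rpow_le_of_hasDerivAt (μ := μ) hp
    ((hG.steklov hh'.ne').sub (hG.steklov hh.ne')) ((hquot h').sub (hquot h))
    (fun a y => (hasDerivAt_steklov (hG.continuous a) hh'.ne' y).sub
      (hasDerivAt_steklov (hG.continuous a) hh.ne' y)) hmeas hx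
  rw [← ENNReal.rpow_le_rpow_iff hp0]
  set ω := familyModulus μ p G
  calc _ ≤ _ := hvar
    _ ≤ ENNReal.ofReal (2 ^ (p - 1) * p) * ((2 * ω h) ^ (p - 1) *
          (3 * (ENNReal.ofReal (1 / h') * ω h'))) := by
        gcongr
        · exact familyNorm_steklov_sub_le hp.le hG hh' hle
        · exact familyNorm_quotient_sub_le hp.le hG hh' hle
    _ = ENNReal.ofReal (2 ^ (p - 1) * p * 2 ^ (p - 1) * 3) * steklovTerm p ω h h' ^ p := by
        rw [steklovTerm_rpow hp0, ENNReal.mul_rpow_of_nonneg _ _ (by linarith),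
          ENNReal.ofReal_mul (q := 3) (by positivity),
          ENNReal.ofReal_mul (q := 2 ^ (p - 1)) (by positivity),
          ← ENNReal.ofReal_rpow_of_pos (x := 2) two_pos, ENNReal.ofReal_ofNat, ENNReal.ofReal_ofNat]
        ring
    _ ≤ ENNReal.ofReal (12 ^ p) * steklovTerm p ω h h' ^ p := by
        gcongr
        exact two_rpow_sub_one_mul_le_twelve_rpow hp.le
    _ = _ := by
        rw [ENNReal.mul_rpow_of_nonneg _ _ hp0.le, ← ENNReal.ofReal_rpow_of_pos (by norm_num),
          ENNReal.ofReal_ofNat]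

lemma familyVariation_steklov_le_sum [SFinite μ] (hp : 1 < p) (hG : PeriodicFamily G)
    (hmeas : ∀ j, Measurable fun a => x a j) (hx : ∀ a, IsPartition n (x a)) {h : ℕ → ℝ}
    (hzero : h 0 = 1) (hpos : ∀ k, 0 < h k) (hanti : Antitone h) (K : ℕ) :
    familyVariation μ p n x (fun a => steklov (h K) (G a)) ≤
      ∑ k ∈ Finset.range K, 12 * steklovTerm p (familyModulus μ p G) (h k) (h (k + 1)) := by
  induction K with
  | zero =>
    rw [Finset.range_zero, Finset.sum_empty, hzero, nonpos_iff_eq_zero]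
    exact familyVariation_const fun a => steklov_one_eq (hG.periodic a)
  | succ K ih =>
    have hmean (k : ℕ) := hG.steklov (hpos k).ne'
    have hsplit : (fun a => steklov (h (K + 1)) (G a)) = fun a y => steklov (h K) (G a) y +
        (steklov (h (K + 1)) (G a) y - steklov (h K) (G a) y) := by
      simp only [add_sub_cancel]
    rw [Finset.sum_range_succ, hsplit]
    refine (familyVariation_add_le hp.le (hmean K).measurable
      ((hmean (K + 1)).sub (hmean K)).measurable hmeas).trans ?_
    exact add_le_add ih
      (familyVariation_steklov_sub_le hp hG hmeas hx (hpos _) (hanti K.le_succ))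

lemma familyVariation_le_tsum_steklovTerm [SFinite μ] (hp : 1 < p) (hG : PeriodicFamily G)
    (hmeas : ∀ j, Measurable fun a => x a j) (hx : ∀ a, IsPartition n (x a)) {h : ℕ → ℝ}
    (hzero : h 0 = 1) (hpos : ∀ k, 0 < h k) (hanti : Antitone h)
    (hlim : Tendsto h atTop (nhds 0)) :
    familyVariation μ p n x G ≤
      12 * ∑' k, steklovTerm p (familyModulus μ p G) (h k) (h (k + 1)) := by
  refine (familyVariation_le_liminf (fun k => (hG.steklov (hpos k).ne').measurable) hmeas
    fun a y => tendsto_steklov (hG.continuous a) y hpos hlim).trans ?_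
  refine liminf_le_of_frequently_le' (Frequently.of_forall fun K => ?_)
  rw [← ENNReal.tsum_mul_left]
  exact (familyVariation_steklov_le_sum hp hG hmeas hx hzero hpos hanti K).trans
    (ENNReal.sum_le_tsum _)

end FamilyVariation

/-! ### Summation of the Steklov terms -/

/-- The weight `t^(-1/p) / t` in the integrals `J_p`, `K_p` and `I_p`. -/
abbrev besovWeight (p t : ℝ) : ℝ≥0∞ := ENNReal.ofReal (t ^ (-(1 / p)) / t)

/-- The factor `1 / (p p')`, where `p'` is the exponent conjugate to `p`. -/
abbrev conjFactor (p : ℝ) : ℝ≥0∞ := ENNReal.ofReal (1 / (p * (p / (p - 1))))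

/-- The bound for the `p`-variation of a function with `L^p` modulus of continuity `ω`, up to an
absolute constant. -/
def besovBound (p : ℝ) (ω : ℝ → ℝ≥0∞) : ℝ≥0∞ :=
  ω 1 + conjFactor p * ∫⁻ t in Ioc (0 : ℝ) 1, besovWeight p t * ω t

lemma besovBound_mono {p : ℝ} {ω ω' : ℝ → ℝ≥0∞} (h : ∀ t ∈ Ioc (0 : ℝ) 1, ω t ≤ ω' t) :
    besovBound p ω ≤ besovBound p ω' := by
  unfold besovBound
  gcongr ?_ + _ * ?_
  · exact h 1 ⟨one_pos, le_rfl⟩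
  · exact setLIntegral_mono' measurableSet_Ioc fun t ht => mul_le_mul_right (h t ht) _

lemma setLIntegral_Ioc_rpow {a b s : ℝ} (ha : 0 < a) (hab : a ≤ b) (hs : s ≠ -1) :
    ∫⁻ t in Ioc a b, ENNReal.ofReal (t ^ s) =
      ENNReal.ofReal ((b ^ (s + 1) - a ^ (s + 1)) / (s + 1)) := by
  have hzero : (0 : ℝ) ∉ uIcc a b := by
    rw [uIcc_of_le hab]
    exact fun h => ha.not_ge h.1
  rw [← integral_rpow (Or.inr ⟨hs, hzero⟩), intervalIntegral.integral_of_le hab,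
    ofReal_integral_eq_lintegral_ofReal]
  · exact (intervalIntegrable_iff_integrableOn_Ioc_of_le hab).1
      (intervalIntegral.intervalIntegrable_rpow (Or.inr hzero))
  · filter_upwards [ae_restrict_mem measurableSet_Ioc] with t ht
    exact Real.rpow_nonneg (ha.le.trans ht.1.le) _

lemma tsum_setLIntegral_Ioc_le (w : ℝ → ℝ≥0∞) {h : ℕ → ℝ} (hone : h 0 ≤ 1) (hpos : ∀ k, 0 < h k)
    (hanti : Antitone h) :
    ∑' k, ∫⁻ t in Ioc (h (k + 1)) (h k), w t ≤ ∫⁻ t in Ioc (0 : ℝ) 1, w t := by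
  have hdisj : Pairwise (Function.onFun Disjoint fun k => Ioc (h (k + 1)) (h k)) :=
    hanti.pairwise_disjoint_on_Ioc_succ
  rw [← lintegral_iUnion (fun k => measurableSet_Ioc) hdisj]
  exact lintegral_mono_set (iUnion_subset fun k t ht =>
    ⟨(hpos _).trans ht.1, ht.2.trans ((hanti (Nat.zero_le k)).trans hone)⟩)

lemma two_rpow_pow_rpow (e s : ℝ) (k : ℕ) : (((2 : ℝ) ^ e) ^ k) ^ s = (2 ^ (e * s)) ^ k := by
  rw [← Real.rpow_natCast, ← Real.rpow_natCast, ← Real.rpow_mul (by positivity),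
    ← Real.rpow_mul (by positivity), ← Real.rpow_mul zero_le_two]
  ring_nf

section Summation

variable {p : ℝ} {ω : ℝ → ℝ≥0∞}

lemma ofReal_rpow_sub_mul_le_setLIntegral (hp : 0 < p) (hω : Monotone ω) {a b : ℝ} (ha : 0 < a)
    (hab : a ≤ b) :
    ENNReal.ofReal (a ^ (-(1 / p)) - b ^ (-(1 / p))) * ω a ≤
      ENNReal.ofReal (1 / p) * ∫⁻ t in Ioc a b, besovWeight p t * ω t := by
  have hweight : ∫⁻ t in Ioc a b, ENNReal.ofReal (t ^ (-(1 / p) - 1)) =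
      ENNReal.ofReal (p * (a ^ (-(1 / p)) - b ^ (-(1 / p)))) := by
    rw [setLIntegral_Ioc_rpow ha hab (by simpa using hp.ne'), sub_add_cancel]
    congr 1
    field_simp
    ring
  calc ENNReal.ofReal (a ^ (-(1 / p)) - b ^ (-(1 / p))) * ω a
      = ENNReal.ofReal (1 / p) *
          ∫⁻ t in Ioc a b, ENNReal.ofReal (t ^ (-(1 / p) - 1)) * ω a := by
        rw [lintegral_mul_const _ (by fun_prop), hweight, ← mul_assoc,
          ← ENNReal.ofReal_mul (by positivity), ← mul_assoc, one_div_mul_cancel hp.ne', one_mul]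
    _ ≤ _ := by
        gcongr _ * ?_
        refine setLIntegral_mono' measurableSet_Ioc fun t ht => ?_
        rw [Real.rpow_sub_one (ha.trans ht.1).ne']
        gcongr
        exact hω ht.1.le

lemma ofReal_rpow_sub_div_mul_le_setLIntegral (hp : 1 < p) {a b : ℝ} (ha : 0 < a) (hab : a ≤ b)
    (hω : ∀ t ∈ Ioc a b, ω b ≤ ENNReal.ofReal (2 * (b / t)) * ω t) :
    ENNReal.ofReal ((b ^ (1 - 1 / p) - a ^ (1 - 1 / p)) / b) * ω b ≤
      2 * (ENNReal.ofReal (1 - 1 / p) * ∫⁻ t in Ioc a b, besovWeight p t * ω t) := by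
  have hp0 : 0 < p := by linarith
  have hb : 0 < b := ha.trans_le hab
  have hexp : 0 < 1 - 1 / p := sub_pos.2 ((div_lt_one hp0).2 hp)
  have hweight : ∫⁻ t in Ioc a b, ENNReal.ofReal (t ^ (-(1 / p))) =
      ENNReal.ofReal ((b ^ (1 - 1 / p) - a ^ (1 - 1 / p)) / (1 - 1 / p)) := by
    rw [setLIntegral_Ioc_rpow ha hab (by intro h; linarith), neg_add_eq_sub]
  calc ENNReal.ofReal ((b ^ (1 - 1 / p) - a ^ (1 - 1 / p)) / b) * ω b
      = 2 * (ENNReal.ofReal (1 - 1 / p) * ∫⁻ t in Ioc a b,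
          ENNReal.ofReal (t ^ (-(1 / p))) * (ENNReal.ofReal (1 / (2 * b)) * ω b)) := by
        rw [lintegral_mul_const _ (by fun_prop), hweight, ← ENNReal.ofReal_ofNat 2, ← mul_assoc,
          ← mul_assoc, ← mul_assoc, ← ENNReal.ofReal_mul zero_le_two,
          ← ENNReal.ofReal_mul (by positivity), ← ENNReal.ofReal_mul' (by positivity)]
        have hne : p - 1 ≠ 0 := by linarith
        congr 2
        field_simp
    _ ≤ _ := by
        gcongr _ * (_ * ?_)
        refine setLIntegral_mono' measurableSet_Ioc fun t ht => ?_
        have ht0 : 0 < t := ha.trans ht.1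
        calc _ ≤ ENNReal.ofReal (t ^ (-(1 / p))) * (ENNReal.ofReal (1 / (2 * b)) *
              (ENNReal.ofReal (2 * (b / t)) * ω t)) := by
              gcongr
              exact hω t ht
          _ = _ := by
              rw [← mul_assoc, ← mul_assoc, mul_assoc (ENNReal.ofReal _),
                ← ENNReal.ofReal_mul (by positivity), ← ENNReal.ofReal_mul (by positivity)]
              congr 2
              field_simp

lemma ofReal_one_div_rpow_one_div (p : ℝ) {h : ℝ} (hh : 0 < h) :
    ENNReal.ofReal (1 / h) ^ (1 / p) = ENNReal.ofReal (h ^ (-(1 / p))) := by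
  rw [ENNReal.ofReal_rpow_of_pos (by positivity), one_div h, Real.inv_rpow hh.le,
    ← Real.rpow_neg hh.le]

lemma rpow_one_sub_mul_rpow (hp : 1 ≤ p) (u : ℝ≥0∞) : u ^ (1 - 1 / p) * u ^ (1 / p) = u := by
  have hp0 : 0 < p := by linarith
  rw [← ENNReal.rpow_add_of_nonneg _ _ (sub_nonneg.2 ((div_le_one hp0).2 hp)) (by positivity),
    sub_add_cancel, ENNReal.rpow_one]

lemma steklovTerm_le_of_monotone (hp : 1 ≤ p) (hω : Monotone ω) {h h' : ℝ} (hh' : 0 < h')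
    (hle : h' ≤ h) : steklovTerm p ω h h' ≤ ENNReal.ofReal (h' ^ (-(1 / p))) * ω h := by
  have : 0 < p := by linarith
  calc steklovTerm p ω h h'
      ≤ ω h ^ (1 - 1 / p) * (ENNReal.ofReal (1 / h') * ω h) ^ (1 / p) := by
        unfold steklovTerm
        gcongr
        exact hω hle
    _ = _ := by
        rw [ENNReal.mul_rpow_of_nonneg _ _ (by positivity), ofReal_one_div_rpow_one_div p hh',
          mul_left_comm, rpow_one_sub_mul_rpow hp]

lemma steklovTerm_le_of_le_mul (hp : 1 ≤ p) {h h' : ℝ} (hh' : 0 < h') {C : ℝ≥0∞}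
    (hω : ω h ≤ C * ω h') :
    steklovTerm p ω h h' ≤ C ^ (1 - 1 / p) * (ENNReal.ofReal (h' ^ (-(1 / p))) * ω h') := by
  have hp0 : 0 < p := by linarith
  have hexp : 0 ≤ 1 - 1 / p := sub_nonneg.2 ((div_le_one hp0).2 hp)
  calc steklovTerm p ω h h'
      ≤ (C * ω h') ^ (1 - 1 / p) * (ENNReal.ofReal (1 / h') * ω h') ^ (1 / p) := by
        unfold steklovTerm
        gcongr
    _ = _ := by
        rw [ENNReal.mul_rpow_of_nonneg _ _ hexp, ENNReal.mul_rpow_of_nonneg _ _ (by positivity),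
          ofReal_one_div_rpow_one_div p hh', mul_mul_mul_comm, mul_comm (C ^ _), mul_assoc,
          mul_left_comm, rpow_one_sub_mul_rpow hp]

-- Steps of ratio `2^(-p)` make the weights `h^(-1/p)` grow dyadically, which is efficient for
-- large `p`.
lemma tsum_steklovTerm_le_of_monotone (hp : 1 ≤ p) (hω : Monotone ω) :
    ∑' k : ℕ, steklovTerm p ω (((2 : ℝ) ^ (-p)) ^ k) ((2 ^ (-p)) ^ (k + 1)) ≤
      2 * ω 1 + 4 * (ENNReal.ofReal (1 / p) * ∫⁻ t in Ioc (0 : ℝ) 1, besovWeight p t * ω t) := by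
  have hp0 : 0 < p := by linarith
  set h : ℕ → ℝ := fun k => ((2 : ℝ) ^ (-p)) ^ k
  have hpos (k : ℕ) : 0 < h k := by positivity
  have hanti : Antitone h := pow_right_anti₀ (by positivity)
    (Real.rpow_le_one_of_one_le_of_nonpos one_le_two (by linarith))
  have hpow (k : ℕ) : h k ^ (-(1 / p)) = 2 ^ k := by
    rw [two_rpow_pow_rpow, neg_mul_neg, mul_one_div_cancel hp0.ne', Real.rpow_one]
  have hterm (k : ℕ) : steklovTerm p ω (h k) (h (k + 1)) ≤ ENNReal.ofReal (2 ^ (k + 1)) * ω (h k) :=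
    hpow (k + 1) ▸ steklovTerm_le_of_monotone hp hω (hpos _) (hanti k.le_succ)
  have hpiece (k : ℕ) : ENNReal.ofReal (2 ^ (k + 1 + 1)) * ω (h (k + 1)) ≤
      4 * (ENNReal.ofReal (1 / p) * ∫⁻ t in Ioc (h (k + 1)) (h k), besovWeight p t * ω t) := by
    have hmono := ofReal_rpow_sub_mul_le_setLIntegral hp0 hω (hpos (k + 1)) (hanti k.le_succ)
    have hfour : ENNReal.ofReal (2 ^ (k + 1 + 1)) = 4 * ENNReal.ofReal (2 ^ (k + 1) - 2 ^ k) := by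
      rw [← ENNReal.ofReal_ofNat 4, ← ENNReal.ofReal_mul (by norm_num)]
      ring_nf
    rw [hpow, hpow] at hmono
    rw [hfour, mul_assoc]
    gcongr
  refine (ENNReal.tsum_le_tsum hterm).trans ?_
  rw [tsum_eq_zero_add' ENNReal.summable]
  refine add_le_add (by simp [h]) ((ENNReal.tsum_le_tsum hpiece).trans ?_)
  rw [ENNReal.tsum_mul_left, ENNReal.tsum_mul_left]
  gcongr
  exact tsum_setLIntegral_Ioc_le _ (pow_zero _).le hpos hanti

lemma steklovTerm_le_four_mul (hp : 1 < p) {h h' : ℝ} (hh' : 0 < h') (hh : 0 < h)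
    (hhalf : h' ^ (1 - 1 / p) = h ^ (1 - 1 / p) / 2)
    (hω : ω h ≤ ENNReal.ofReal (2 * (h / h')) * ω h') :
    steklovTerm p ω h h' ≤ 4 * (ENNReal.ofReal (h' ^ (-(1 / p))) * ω h') := by
  refine (steklovTerm_le_of_le_mul hp.le hh' hω).trans ?_
  gcongr
  have hle : (2 : ℝ) ^ (1 - 1 / p) ≤ 2 :=
    Real.rpow_le_self_of_one_le one_le_two (sub_le_self _ (by positivity))
  rw [ENNReal.ofReal_rpow_of_pos (by positivity), Real.mul_rpow zero_le_two (by positivity),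
    Real.div_rpow hh.le hh'.le, hhalf, div_div_cancel₀ (by positivity), ← ENNReal.ofReal_ofNat 4]
  exact ENNReal.ofReal_le_ofReal (by linarith)

lemma ofReal_rpow_neg_mul_le_setLIntegral (hp : 1 < p) {h h' : ℝ} (hh' : 0 < h') (hle : h' ≤ h)
    (hhalf : h' ^ (1 - 1 / p) = h ^ (1 - 1 / p) / 2)
    (hω : ∀ t ∈ Ioc h' h, ω h ≤ ENNReal.ofReal (2 * (h / t)) * ω t) :
    ENNReal.ofReal (h ^ (-(1 / p))) * ω h ≤
      4 * (ENNReal.ofReal (1 - 1 / p) * ∫⁻ t in Ioc h' h, besovWeight p t * ω t) := by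
  have htwo : ENNReal.ofReal (h ^ (-(1 / p))) =
      2 * ENNReal.ofReal ((h ^ (1 - 1 / p) - h' ^ (1 - 1 / p)) / h) := by
    rw [← ENNReal.ofReal_ofNat 2, ← ENNReal.ofReal_mul zero_le_two, hhalf,
      show -(1 / p) = 1 - 1 / p - 1 by ring, Real.rpow_sub_one (hh'.trans_le hle).ne']
    ring_nf
  rw [htwo, mul_assoc, show (4 : ℝ≥0∞) = 2 * 2 by norm_num, mul_assoc]
  exact mul_le_mul_right (ofReal_rpow_sub_div_mul_le_setLIntegral hp hh' hle hω) 2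

-- Steps of ratio `2^(-p')`, with `p'` conjugate to `p`, are efficient for `p` close to one.
lemma tsum_steklovTerm_le_of_quasilinear (hp : 1 < p)
    (hω : ∀ s t, 0 < s → s ≤ t → ω t ≤ ENNReal.ofReal (2 * (t / s)) * ω s) :
    ∑' k : ℕ, steklovTerm p ω (((2 : ℝ) ^ (-(1 / (1 - 1 / p)))) ^ k)
        ((2 ^ (-(1 / (1 - 1 / p)))) ^ (k + 1)) ≤
      16 * (ENNReal.ofReal (1 - 1 / p) * ∫⁻ t in Ioc (0 : ℝ) 1, besovWeight p t * ω t) := by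
  have hp0 : 0 < p := by linarith
  have hexp : 0 < 1 - 1 / p := sub_pos.2 ((div_lt_one hp0).2 hp)
  set c := 1 - 1 / p
  set h : ℕ → ℝ := fun k => ((2 : ℝ) ^ (-(1 / c))) ^ k
  have hpos (k : ℕ) : 0 < h k := by positivity
  have hanti : Antitone h := pow_right_anti₀ (by positivity)
    (Real.rpow_le_one_of_one_le_of_nonpos one_le_two (by simpa using hexp.le))
  have hpow (k : ℕ) : h k ^ c = (1 / 2) ^ k := by
    rw [two_rpow_pow_rpow, neg_mul, one_div_mul_cancel hexp.ne', Real.rpow_neg_one, one_div]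
  have hhalf (k : ℕ) : h (k + 1) ^ c = h k ^ c / 2 := by
    rw [hpow, hpow, pow_succ, mul_one_div]
  have hterm (k : ℕ) : steklovTerm p ω (h k) (h (k + 1)) ≤
      4 * (ENNReal.ofReal (h (k + 1) ^ (-(1 / p))) * ω (h (k + 1))) :=
    steklovTerm_le_four_mul hp (hpos _) (hpos _) (hhalf k) (hω _ _ (hpos _) (hanti k.le_succ))
  have hpiece (k : ℕ) : ENNReal.ofReal (h k ^ (-(1 / p))) * ω (h k) ≤
      4 * (ENNReal.ofReal c * ∫⁻ t in Ioc (h (k + 1)) (h k), besovWeight p t * ω t) :=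
    ofReal_rpow_neg_mul_le_setLIntegral hp (hpos _) (hanti k.le_succ) (hhalf k)
      fun t ht => hω t _ ((hpos _).trans ht.1) ht.2
  calc _ ≤ ∑' k, 4 * (4 * (ENNReal.ofReal c *
          ∫⁻ t in Ioc (h (k + 1 + 1)) (h (k + 1)), besovWeight p t * ω t)) :=
        ENNReal.tsum_le_tsum fun k => (hterm k).trans (mul_le_mul_right (hpiece (k + 1)) 4)
    _ = 16 * (ENNReal.ofReal c *
          ∑' k, ∫⁻ t in Ioc (h (k + 1 + 1)) (h (k + 1)), besovWeight p t * ω t) := by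
        rw [ENNReal.tsum_mul_left, ENNReal.tsum_mul_left, ENNReal.tsum_mul_left, ← mul_assoc]
        norm_num
    _ ≤ _ := by
        gcongr
        exact tsum_setLIntegral_Ioc_le (h := fun k => h (k + 1)) _
          ((hanti (Nat.zero_le 1)).trans (pow_zero _).le) (fun k => hpos _)
          fun i j hij => hanti (Nat.succ_le_succ hij)

end Summation

/-! ### The one-variable theorem for families -/

section FamilyTheorem

variable {α : Type*} [MeasurableSpace α] {μ : Measure α} [SFinite μ] {p : ℝ} {G : α → ℝ → ℝ}
  {n : ℕ} {x : α → ℕ → ℝ}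

lemma conjFactor_eq (hp : 1 < p) : conjFactor p = ENNReal.ofReal (1 / p * (1 - 1 / p)) := by
  have hne : p - 1 ≠ 0 := by linarith
  unfold conjFactor
  congr 1
  field_simp

lemma ofReal_one_div_le_conjFactor (hp : 2 ≤ p) : ENNReal.ofReal (1 / p) ≤ 2 * conjFactor p := by
  rw [conjFactor_eq (by linarith), ← ENNReal.ofReal_ofNat 2, ← ENNReal.ofReal_mul zero_le_two]
  refine ENNReal.ofReal_le_ofReal ?_
  have hhalf : 1 / p ≤ 1 / 2 := one_div_le_one_div_of_le two_pos hp
  have hpos : 0 < 1 / p := by positivity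
  nlinarith

lemma ofReal_one_sub_one_div_le_conjFactor (hp : 1 < p) (hp2 : p ≤ 2) :
    ENNReal.ofReal (1 - 1 / p) ≤ 2 * conjFactor p := by
  rw [conjFactor_eq hp, ← ENNReal.ofReal_ofNat 2, ← ENNReal.ofReal_mul zero_le_two]
  refine ENNReal.ofReal_le_ofReal ?_
  have hp0 : 0 < p := by linarith
  have hhalf : 1 / 2 ≤ 1 / p := one_div_le_one_div_of_le hp0 hp2
  have hexp : 0 ≤ 1 - 1 / p := sub_nonneg.2 ((div_le_one hp0).2 hp.le)
  nlinarith

lemma familyVariation_le_of_two_le (hp : 2 ≤ p) (hG : PeriodicFamily G)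
    (hmeas : ∀ j, Measurable fun a => x a j) (hx : ∀ a, IsPartition n (x a)) :
    familyVariation μ p n x G ≤ 384 * besovBound p (familyModulus μ p G) := by
  have hr : (2 : ℝ) ^ (-p) < 1 := Real.rpow_lt_one_of_one_lt_of_neg one_lt_two (by linarith)
  set I := ∫⁻ t in Ioc (0 : ℝ) 1, besovWeight p t * familyModulus μ p G t
  calc familyVariation μ p n x G
      ≤ 12 * ∑' k : ℕ,
          steklovTerm p (familyModulus μ p G) ((2 ^ (-p)) ^ k) ((2 ^ (-p)) ^ (k + 1)) :=
        familyVariation_le_tsum_steklovTerm (by linarith) hG hmeas hx (pow_zero _)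
          (fun k => by positivity) (pow_right_anti₀ (by positivity) hr.le)
          (tendsto_pow_atTop_nhds_zero_of_lt_one (by positivity) hr)
    _ ≤ 12 * (2 * familyModulus μ p G 1 + 4 * (ENNReal.ofReal (1 / p) * I)) := by
        gcongr
        exact tsum_steklovTerm_le_of_monotone (by linarith) familyModulus_mono
    _ ≤ 12 * (2 * familyModulus μ p G 1 + 4 * (2 * conjFactor p * I)) := by
        gcongr
        exact ofReal_one_div_le_conjFactor hp
    _ = 24 * familyModulus μ p G 1 + 96 * (conjFactor p * I) := by ring
    _ ≤ 384 * familyModulus μ p G 1 + 384 * (conjFactor p * I) := by gcongr <;> norm_num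
    _ = _ := (mul_add _ _ _).symm

lemma familyVariation_le_of_le_two (hp : 1 < p) (hp2 : p ≤ 2) (hG : PeriodicFamily G)
    (hmeas : ∀ j, Measurable fun a => x a j) (hx : ∀ a, IsPartition n (x a)) :
    familyVariation μ p n x G ≤ 384 * besovBound p (familyModulus μ p G) := by
  have hexp : 0 < 1 - 1 / p := sub_pos.2 ((div_lt_one (by linarith)).2 hp)
  set c := 1 - 1 / p
  have hr : (2 : ℝ) ^ (-(1 / c)) < 1 :=
    Real.rpow_lt_one_of_one_lt_of_neg one_lt_two (by simpa using hexp)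
  set I := ∫⁻ t in Ioc (0 : ℝ) 1, besovWeight p t * familyModulus μ p G t
  calc familyVariation μ p n x G
      ≤ 12 * ∑' k : ℕ, steklovTerm p (familyModulus μ p G) ((2 ^ (-(1 / c))) ^ k)
          ((2 ^ (-(1 / c))) ^ (k + 1)) :=
        familyVariation_le_tsum_steklovTerm hp hG hmeas hx (pow_zero _)
          (fun k => by positivity) (pow_right_anti₀ (by positivity) hr.le)
          (tendsto_pow_atTop_nhds_zero_of_lt_one (by positivity) hr)
    _ ≤ 12 * (16 * (ENNReal.ofReal c * I)) := by
        gcongr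
        exact tsum_steklovTerm_le_of_quasilinear hp fun s t hs hst =>
          familyModulus_le_ofReal_mul hp.le hG.measurable hG.periodic hs hst
    _ ≤ 12 * (16 * (2 * conjFactor p * I)) := by
        gcongr
        exact ofReal_one_sub_one_div_le_conjFactor hp hp2
    _ = 384 * (conjFactor p * I) := by ring
    _ ≤ _ := by
        gcongr
        exact le_add_self

theorem familyVariation_le_besovBound (hp : 1 < p) (hG : PeriodicFamily G)
    (hmeas : ∀ j, Measurable fun a => x a j) (hx : ∀ a, IsPartition n (x a)) :
    familyVariation μ p n x G ≤ 384 * besovBound p (familyModulus μ p G) :=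
  (le_total 2 p).elim (familyVariation_le_of_two_le · hG hmeas hx)
    (familyVariation_le_of_le_two hp · hG hmeas hx)

end FamilyTheorem

/-! ### Differences and moduli of functions of two variables -/

section TwoVariables

variable {p : ℝ} {f g : ℝ → ℝ → ℝ}

/-- The difference `f(x + s, y + t) - f(x, y)`. The mixed difference `Δ(s,t)f` is
`shiftDiff 0 t (shiftDiff s 0 f)`. -/
def shiftDiff (s t : ℝ) (f : ℝ → ℝ → ℝ) : ℝ → ℝ → ℝ := fun x y => f (x + s) (y + t) - f x y

/-- The functions to which the moduli of continuity apply; no integrability is assumed. -/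
structure MeasurableBiPeriodic (f : ℝ → ℝ → ℝ) : Prop where
  measurable : Measurable (Function.uncurry f)
  biPeriodic : BiPeriodic f

lemma shiftDiff_shiftDiff (s t : ℝ) (f : ℝ → ℝ → ℝ) :
    shiftDiff 0 t (shiftDiff s 0 f) =
      fun x y => f (x + s) (y + t) - f (x + s) y - f x (y + t) + f x y := by
  ext x y
  simp only [shiftDiff, add_zero]
  ring

lemma shiftDiff_comm (s t s' t' : ℝ) (f : ℝ → ℝ → ℝ) :
    shiftDiff s t (shiftDiff s' t' f) = shiftDiff s' t' (shiftDiff s t f) := by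
  ext x y
  simp only [shiftDiff, add_right_comm x s s', add_right_comm y t t']
  ring

lemma shiftDiff_sub (s t : ℝ) (f g : ℝ → ℝ → ℝ) :
    shiftDiff s t (f - g) = shiftDiff s t f - shiftDiff s t g := by
  ext x y
  exact sub_sub_sub_comm _ _ _ _

lemma measurable_shiftDiff (hf : Measurable (Function.uncurry f)) (s t : ℝ) :
    Measurable (Function.uncurry (shiftDiff s t f)) :=
  (hf.comp ((measurable_fst.add_const s).prodMk (measurable_snd.add_const t))).sub hf

lemma MeasurableBiPeriodic.translate (hf : MeasurableBiPeriodic f) (s t : ℝ) :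
    MeasurableBiPeriodic fun x y => f (x + s) (y + t) where
  measurable :=
    hf.measurable.comp ((measurable_fst.add_const s).prodMk (measurable_snd.add_const t))
  biPeriodic := ⟨fun x y => by simp only [add_right_comm x 1 s, hf.biPeriodic.1],
    fun x y => by simp only [add_right_comm y 1 t, hf.biPeriodic.2]⟩

lemma MeasurableBiPeriodic.sub (hf : MeasurableBiPeriodic f) (hg : MeasurableBiPeriodic g) :
    MeasurableBiPeriodic (f - g) where
  measurable := hf.measurable.sub hg.measurable
  biPeriodic := ⟨fun x y => congrArg₂ (· - ·) (hf.biPeriodic.1 x y) (hg.biPeriodic.1 x y),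
    fun x y => congrArg₂ (· - ·) (hf.biPeriodic.2 x y) (hg.biPeriodic.2 x y)⟩

lemma MeasurableBiPeriodic.shiftDiff (hf : MeasurableBiPeriodic f) (s t : ℝ) :
    MeasurableBiPeriodic (shiftDiff s t f) :=
  (hf.translate s t).sub hf

lemma MeasurableBiPeriodic.swap (hf : MeasurableBiPeriodic f) :
    MeasurableBiPeriodic (Function.swap f) where
  measurable := hf.measurable.comp measurable_swap
  biPeriodic := ⟨fun x y => hf.biPeriodic.2 y x, fun x y => hf.biPeriodic.1 y x⟩

lemma lpNorm2_eq_lintegral (hp : 0 ≤ p) (f : ℝ → ℝ → ℝ) :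
    lpNorm2 p f = (∫⁻ x, ∫⁻ y, ‖f x y‖ₑ ^ p ∂unitMeasure ∂unitMeasure) ^ (1 / p) := by
  simp only [lpNorm2, ofReal_abs_rpow hp]
  rw [Measure.restrict_congr_set (Ioc_ae_eq_Icc (a := (0 : ℝ)) (b := 1) (μ := volume)).symm]

lemma lpNorm2_eq_familyNorm (hp : 0 < p) (hf : Measurable (Function.uncurry f)) :
    lpNorm2 p f = familyNorm unitMeasure p f := by
  rw [lpNorm2_eq_lintegral hp.le, ← familyNorm_rpow hp hf, ← ENNReal.rpow_mul,
    mul_one_div_cancel hp.ne', ENNReal.rpow_one]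

lemma lpNorm2_swap (hp : 0 < p) (hf : Measurable (Function.uncurry f)) :
    lpNorm2 p (Function.swap f) = lpNorm2 p f := by
  rw [lpNorm2_eq_familyNorm hp hf,
    lpNorm2_eq_familyNorm (f := Function.swap f) hp (hf.comp measurable_swap)]
  have hswap := eLpNorm_comp_measurePreserving (p := ENNReal.ofReal p) hf.aestronglyMeasurable
    (Measure.measurePreserving_swap (μ := unitMeasure) (ν := unitMeasure))
  exact hswap

lemma lpNorm2_translate (hp : 0 ≤ p) (hf : BiPeriodic f) (s t : ℝ) :
    lpNorm2 p (fun x y => f (x + s) (y + t)) = lpNorm2 p f := by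
  have hinner (x : ℝ) : ∫⁻ y, ‖f x (y + t)‖ₑ ^ p ∂unitMeasure = ∫⁻ y, ‖f x y‖ₑ ^ p ∂unitMeasure :=
    lintegral_unitMeasure_add_right (φ := fun y => ‖f x y‖ₑ ^ p) (fun y => by simp only [hf.2]) t
  have houter := lintegral_unitMeasure_add_right
    (φ := fun x => ∫⁻ y, ‖f x y‖ₑ ^ p ∂unitMeasure) (fun x => by simp only [hf.1]) s
  rw [lpNorm2_eq_lintegral hp, lpNorm2_eq_lintegral hp]
  simp only [hinner, houter]

lemma lpNorm2_sub_le (hp : 1 ≤ p) (hf : Measurable (Function.uncurry f))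
    (hg : Measurable (Function.uncurry g)) : lpNorm2 p (f - g) ≤ lpNorm2 p f + lpNorm2 p g := by
  have hp0 : 0 < p := by linarith
  rw [lpNorm2_eq_familyNorm (f := f - g) hp0 (hf.sub hg), lpNorm2_eq_familyNorm hp0 hf,
    lpNorm2_eq_familyNorm hp0 hg]
  exact familyNorm_sub_le hp hf hg

lemma lpNorm2_shiftDiff_le (hp : 1 ≤ p) (hf : MeasurableBiPeriodic f) (s t : ℝ) :
    lpNorm2 p (shiftDiff s t f) ≤ 2 * lpNorm2 p f := by
  refine (lpNorm2_sub_le hp (hf.translate s t).measurable hf.measurable).trans_eq ?_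
  rw [lpNorm2_translate (by linarith) hf.biPeriodic, two_mul]

lemma lpNorm2_congr_ae (h : ∀ᵐ z : ℝ × ℝ, f z.1 z.2 = g z.1 z.2) : lpNorm2 p f = lpNorm2 p g := by
  unfold lpNorm2
  congr 1
  refine lintegral_congr_ae (ae_restrict_of_ae ?_)
  filter_upwards [Measure.ae_ae_of_ae_prod h] with x hx
  refine lintegral_congr_ae (ae_restrict_of_ae ?_)
  filter_upwards [hx] with y hy
  rw [hy]

lemma shiftDiff_congr_ae (h : ∀ᵐ z : ℝ × ℝ, f z.1 z.2 = g z.1 z.2) (s t : ℝ) :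
    ∀ᵐ z : ℝ × ℝ, shiftDiff s t f z.1 z.2 = shiftDiff s t g z.1 z.2 := by
  filter_upwards [h, (measurePreserving_add_right volume (s, t)).quasiMeasurePreserving.ae h]
    with z hz hz'
  exact congrArg₂ _ hz' hz

lemma lpNorm2_shiftDiff_le_modulus2 {s t δ : ℝ} (h : √(s ^ 2 + t ^ 2) ≤ δ) :
    lpNorm2 p (shiftDiff s t f) ≤ modulus2 p f δ :=
  le_iSup₂_of_le (s, t) h le_rfl

lemma modulus2_le {δ : ℝ} {C : ℝ≥0∞}
    (h : ∀ s t, √(s ^ 2 + t ^ 2) ≤ δ → lpNorm2 p (shiftDiff s t f) ≤ C) : modulus2 p f δ ≤ C :=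
  iSup₂_le fun z hz => h z.1 z.2 hz

lemma lpNorm2_shiftDiff_le_mixedModulus {s t u v : ℝ} (hs : s ∈ Icc 0 u) (ht : t ∈ Icc 0 v) :
    lpNorm2 p (shiftDiff 0 t (shiftDiff s 0 f)) ≤ mixedModulus p f u v := by
  rw [shiftDiff_shiftDiff]
  exact le_iSup₂_of_le s hs (le_iSup₂_of_le t ht le_rfl)

lemma mixedModulus_le {u v : ℝ} {C : ℝ≥0∞}
    (h : ∀ s ∈ Icc 0 u, ∀ t ∈ Icc 0 v, lpNorm2 p (shiftDiff 0 t (shiftDiff s 0 f)) ≤ C) :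
    mixedModulus p f u v ≤ C :=
  iSup₂_le fun s hs => iSup₂_le fun t ht => shiftDiff_shiftDiff s t f ▸ h s hs t ht

lemma modulus2_mono : Monotone (modulus2 p f) := fun _ _ h =>
  modulus2_le fun _ _ hst => lpNorm2_shiftDiff_le_modulus2 (hst.trans h)

lemma mixedModulus_mono {u v u' v' : ℝ} (hu : u ≤ u') (hv : v ≤ v') :
    mixedModulus p f u v ≤ mixedModulus p f u' v' :=
  mixedModulus_le fun _ hs _ ht =>
    lpNorm2_shiftDiff_le_mixedModulus ⟨hs.1, hs.2.trans hu⟩ ⟨ht.1, ht.2.trans hv⟩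

lemma modulus2_swap (hp : 0 < p) (hf : Measurable (Function.uncurry f)) :
    modulus2 p (Function.swap f) = modulus2 p f := by
  have hle {g : ℝ → ℝ → ℝ} (hg : Measurable (Function.uncurry g)) (δ : ℝ) :
      modulus2 p (Function.swap g) δ ≤ modulus2 p g δ := modulus2_le fun s t hst => by
    rw [show shiftDiff s t (Function.swap g) = Function.swap (shiftDiff t s g) from rfl,
      lpNorm2_swap hp (measurable_shiftDiff hg t s)]
    exact lpNorm2_shiftDiff_le_modulus2 (add_comm (s ^ 2) _ ▸ hst)
  exact funext fun δ => (hle hf δ).antisymm (hle (g := Function.swap f) (hf.comp measurable_swap) δ)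

lemma mixedModulus_swap (hp : 0 < p) (hf : Measurable (Function.uncurry f)) (u v : ℝ) :
    mixedModulus p (Function.swap f) u v = mixedModulus p f v u := by
  have hle {g : ℝ → ℝ → ℝ} (hg : Measurable (Function.uncurry g)) (u v : ℝ) :
      mixedModulus p (Function.swap g) u v ≤ mixedModulus p g v u :=
    mixedModulus_le fun s hs t ht => by
      rw [show shiftDiff 0 t (shiftDiff s 0 (Function.swap g)) =
          Function.swap (shiftDiff t 0 (shiftDiff 0 s g)) from rfl,
        lpNorm2_swap hp (measurable_shiftDiff (measurable_shiftDiff hg 0 s) t 0), shiftDiff_comm]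
      exact lpNorm2_shiftDiff_le_mixedModulus ht hs
  exact (hle hf u v).antisymm
    (hle (g := Function.swap f) (hf.comp measurable_swap) v u)

lemma modulus2_congr_ae (h : ∀ᵐ z : ℝ × ℝ, f z.1 z.2 = g z.1 z.2) :
    modulus2 p f = modulus2 p g :=
  funext fun _ => iSup_congr fun z => iSup_congr fun _ =>
    lpNorm2_congr_ae (shiftDiff_congr_ae h z.1 z.2)

lemma mixedModulus_congr_ae (h : ∀ᵐ z : ℝ × ℝ, f z.1 z.2 = g z.1 z.2) :
    mixedModulus p f = mixedModulus p g := by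
  ext u v
  refine iSup_congr fun s => iSup_congr fun _ => iSup_congr fun t => iSup_congr fun _ => ?_
  rw [← shiftDiff_shiftDiff, ← shiftDiff_shiftDiff]
  exact lpNorm2_congr_ae (shiftDiff_congr_ae (shiftDiff_congr_ae h s 0) 0 t)

lemma modulus2_le_lpNorm2 (hp : 1 ≤ p) (hf : MeasurableBiPeriodic f) (δ : ℝ) :
    modulus2 p f δ ≤ 2 * lpNorm2 p f :=
  modulus2_le fun s t _ => lpNorm2_shiftDiff_le hp hf s t

lemma mixedModulus_le_modulus2_left (hp : 1 ≤ p) (hf : MeasurableBiPeriodic f) (u v : ℝ) :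
    mixedModulus p f u v ≤ 2 * modulus2 p f u :=
  mixedModulus_le fun s hs t _ => (lpNorm2_shiftDiff_le hp (hf.shiftDiff s 0) 0 t).trans <| by
    gcongr
    exact lpNorm2_shiftDiff_le_modulus2 (by simpa [Real.sqrt_sq hs.1] using hs.2)

lemma mixedModulus_le_modulus2_right (hp : 1 ≤ p) (hf : MeasurableBiPeriodic f) (u v : ℝ) :
    mixedModulus p f u v ≤ 2 * modulus2 p f v := by
  have hp0 : 0 < p := by linarith
  rw [← modulus2_swap hp0 hf.measurable, ← mixedModulus_swap hp0 hf.measurable]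
  exact mixedModulus_le_modulus2_left hp hf.swap v u

lemma modulus2_sub_le (hp : 1 ≤ p) (hf : Measurable (Function.uncurry f))
    (hg : Measurable (Function.uncurry g)) (δ : ℝ) :
    modulus2 p (f - g) δ ≤ modulus2 p f δ + modulus2 p g δ :=
  modulus2_le fun s t h => by
    rw [shiftDiff_sub]
    exact (lpNorm2_sub_le hp (measurable_shiftDiff hf s t) (measurable_shiftDiff hg s t)).trans
      (add_le_add (lpNorm2_shiftDiff_le_modulus2 h) (lpNorm2_shiftDiff_le_modulus2 h))

lemma mixedModulus_sub_le (hp : 1 ≤ p) (hf : Measurable (Function.uncurry f))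
    (hg : Measurable (Function.uncurry g)) (u v : ℝ) :
    mixedModulus p (f - g) u v ≤ mixedModulus p f u v + mixedModulus p g u v :=
  mixedModulus_le fun s hs t ht => by
    rw [shiftDiff_sub, shiftDiff_sub]
    exact (lpNorm2_sub_le hp (measurable_shiftDiff (measurable_shiftDiff hf s 0) 0 t)
      (measurable_shiftDiff (measurable_shiftDiff hg s 0) 0 t)).trans
      (add_le_add (lpNorm2_shiftDiff_le_mixedModulus hs ht)
        (lpNorm2_shiftDiff_le_mixedModulus hs ht))

end TwoVariables

/-! ### The Besov-type bounds for functions of two variables -/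

lemma aemeasurable_of_monotone_prod {g : ℝ × ℝ → ℝ≥0∞} (hg : Monotone g) : AEMeasurable g := by
  suffices h : NullMeasurable g (volume : Measure (ℝ × ℝ)) from h.aemeasurable
  refine measurable_of_Ioi (δ := NullMeasurableSpace (ℝ × ℝ) volume) fun c => ?_
  have hupper : IsUpperSet {w : Fin 2 → ℝ | c < g (w 0, w 1)} := fun a b hab ha =>
    lt_of_lt_of_le ha (hg ⟨hab 0, hab 1⟩)
  exact hupper.ordConnected.nullMeasurableSet.preimage
    (volume_preserving_finTwoArrow ℝ).symm.quasiMeasurePreserving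

section TwoVariableBounds

variable {p : ℝ} {f F : ℝ → ℝ → ℝ}

/-- The integrand of `Ip` with the weight split into factors. -/
def mixedIntegrand (p : ℝ) (f : ℝ → ℝ → ℝ) (z : ℝ × ℝ) : ℝ≥0∞ :=
  besovWeight p z.1 * besovWeight p z.2 * mixedModulus p f z.1 z.2

lemma aemeasurable_mixedIntegrand (p : ℝ) (f : ℝ → ℝ → ℝ) :
    AEMeasurable (mixedIntegrand p f) (unitMeasure.prod unitMeasure) := by
  have hmono : Monotone fun z : ℝ × ℝ => mixedModulus p f z.1 z.2 :=
    fun _ _ h => mixedModulus_mono h.1 h.2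
  have hweight : Measurable fun z : ℝ × ℝ => besovWeight p z.1 * besovWeight p z.2 := by fun_prop
  have hmeas : AEMeasurable (mixedIntegrand p f) :=
    hweight.aemeasurable.mul (aemeasurable_of_monotone_prod hmono)
  rw [Measure.prod_restrict, ← Measure.volume_eq_prod]
  exact hmeas.restrict

lemma Ip_eq_lintegral_prod (p : ℝ) (f : ℝ → ℝ → ℝ) :
    Ip p f = ∫⁻ z, mixedIntegrand p f z ∂(unitMeasure.prod unitMeasure) := by
  rw [lintegral_prod _ (aemeasurable_mixedIntegrand p f)]
  refine setLIntegral_congr_fun measurableSet_Ioc fun u hu =>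
    setLIntegral_congr_fun measurableSet_Ioc fun v hv => ?_
  have hu0 := hu.1
  have hv0 := hv.1
  dsimp only [mixedIntegrand, besovWeight]
  rw [← ENNReal.ofReal_mul (by positivity), Real.mul_rpow hu0.le hv0.le, div_mul_div_comm]

lemma measurable_besovWeight_mul {p : ℝ} {ω : ℝ → ℝ≥0∞} (hω : Monotone ω) :
    Measurable fun t => besovWeight p t * ω t :=
  (by fun_prop : Measurable (besovWeight p)).mul hω.measurable

lemma Ip_eq_iterated (p : ℝ) (f : ℝ → ℝ → ℝ) :
    Ip p f = ∫⁻ t in Ioc (0 : ℝ) 1, besovWeight p t *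
      ∫⁻ s in Ioc (0 : ℝ) 1, besovWeight p s * mixedModulus p f s t := by
  rw [Ip_eq_lintegral_prod, lintegral_prod_symm _ (aemeasurable_mixedIntegrand p f)]
  congr 1 with t
  rw [← lintegral_const_mul _
    (measurable_besovWeight_mul fun _ _ h => mixedModulus_mono h le_rfl)]
  congr 1 with s
  simp only [mixedIntegrand]
  ring

lemma Kp_eq_add (p : ℝ) (f : ℝ → ℝ → ℝ) :
    Kp p f = (∫⁻ s in Ioc (0 : ℝ) 1, besovWeight p s * mixedModulus p f s 1) +
      ∫⁻ t in Ioc (0 : ℝ) 1, besovWeight p t * mixedModulus p f 1 t := by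
  rw [← lintegral_add_left
    (measurable_besovWeight_mul fun _ _ h => mixedModulus_mono h le_rfl)]
  simp only [Kp, mul_add]

lemma Kp_swap (hp : 0 < p) (hf : Measurable (Function.uncurry f)) :
    Kp p (Function.swap f) = Kp p f := by
  rw [Kp_eq_add, Kp_eq_add, add_comm]
  simp only [mixedModulus_swap hp hf]

lemma Ip_swap (hp : 0 < p) (hf : Measurable (Function.uncurry f)) :
    Ip p (Function.swap f) = Ip p f := by
  rw [Ip_eq_lintegral_prod, Ip_eq_lintegral_prod,
    ← lintegral_prod_swap (mixedIntegrand p f)]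
  congr 1 with z
  simp only [mixedIntegrand, mixedModulus_swap hp hf, Prod.fst_swap, Prod.snd_swap]
  ring

/-- The bound for the `L^p` average of the `p`-variations of the sections of `f`. -/
def sectionBound (p : ℝ) (f : ℝ → ℝ → ℝ) : ℝ≥0∞ := 384 * besovBound p (modulus2 p f)

/-- The bound for the `p`-variation of `x ↦ v_p(f_x)`. -/
def mixedBound (p : ℝ) (f : ℝ → ℝ → ℝ) : ℝ≥0∞ :=
  384 ^ 2 * (mixedModulus p f 1 1 + conjFactor p * Kp p f + conjFactor p ^ 2 * Ip p f)

lemma sectionBound_swap (hp : 0 < p) (hf : Measurable (Function.uncurry f)) :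
    sectionBound p (Function.swap f) = sectionBound p f := by
  simp only [sectionBound, modulus2_swap hp hf]

lemma mixedBound_swap (hp : 0 < p) (hf : Measurable (Function.uncurry f)) :
    mixedBound p (Function.swap f) = mixedBound p f := by
  simp only [mixedBound, mixedModulus_swap hp hf, Kp_swap hp hf, Ip_swap hp hf]

lemma mixedBound_eq_besovBound (p : ℝ) (f : ℝ → ℝ → ℝ) :
    mixedBound p f =
      384 * besovBound p fun t => 384 * besovBound p fun s => mixedModulus p f s t := by
  have hintegrand (t : ℝ) : besovWeight p t * (384 * besovBound p fun s => mixedModulus p f s t) =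
      384 * (besovWeight p t * mixedModulus p f 1 t + conjFactor p * (besovWeight p t *
        ∫⁻ s in Ioc (0 : ℝ) 1, besovWeight p s * mixedModulus p f s t)) := by
    rw [besovBound]
    ring
  rw [besovBound, lintegral_congr hintegrand, lintegral_const_mul' _ _ (by simp),
    lintegral_add_left (measurable_besovWeight_mul fun _ _ h => mixedModulus_mono le_rfl h),
    lintegral_const_mul' _ _ ENNReal.ofReal_ne_top, ← Ip_eq_iterated, mixedBound, Kp_eq_add,
    besovBound]
  ring

/-- The continuous functions to which the variation estimates apply. -/
structure ContinuousBiPeriodic (F : ℝ → ℝ → ℝ) : Prop where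
  continuous : Continuous (Function.uncurry F)
  biPeriodic : BiPeriodic F

namespace ContinuousBiPeriodic

lemma measurable (hF : ContinuousBiPeriodic F) : Measurable (Function.uncurry F) :=
  hF.continuous.measurable

lemma measurableBiPeriodic (hF : ContinuousBiPeriodic F) : MeasurableBiPeriodic F :=
  ⟨hF.measurable, hF.biPeriodic⟩

lemma swap (hF : ContinuousBiPeriodic F) : ContinuousBiPeriodic (Function.swap F) :=
  ⟨hF.continuous.comp continuous_swap, hF.measurableBiPeriodic.swap.biPeriodic⟩

lemma sub {G : ℝ → ℝ → ℝ} (hF : ContinuousBiPeriodic F) (hG : ContinuousBiPeriodic G) :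
    ContinuousBiPeriodic (F - G) :=
  ⟨hF.continuous.sub hG.continuous,
    (hF.measurableBiPeriodic.sub hG.measurableBiPeriodic).biPeriodic⟩

lemma shiftDiff (hF : ContinuousBiPeriodic F) (s t : ℝ) :
    ContinuousBiPeriodic (shiftDiff s t F) :=
  ⟨(hF.continuous.comp (by fun_prop : Continuous fun z : ℝ × ℝ => (z.1 + s, z.2 + t))).sub
    hF.continuous, (hF.measurableBiPeriodic.shiftDiff s t).biPeriodic⟩

lemma periodicFamily (hF : ContinuousBiPeriodic F) : PeriodicFamily F where
  measurable := hF.measurable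
  continuous a := hF.continuous.comp (Continuous.prodMk_right a)
  periodic := hF.biPeriodic.2

lemma periodicFamily_increments (hF : ContinuousBiPeriodic F) (m : ℕ) (x : ℕ → ℝ) :
    PeriodicFamily fun (i : Fin m) b => F (x (i + 1)) b - F (x i) b where
  measurable := measurable_from_prod_countable_right fun i =>
    ((hF.periodicFamily.continuous (x (i + 1))).sub
      (hF.periodicFamily.continuous (x i))).measurable
  continuous _ := (hF.periodicFamily.continuous _).sub (hF.periodicFamily.continuous _)
  periodic _ := (hF.periodicFamily.periodic _).sub (hF.periodicFamily.periodic _)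

end ContinuousBiPeriodic

lemma familyModulus_le_modulus2 (hp : 0 < p) (hF : Measurable (Function.uncurry F)) (t : ℝ) :
    familyModulus unitMeasure p F t ≤ modulus2 p F t := by
  refine iSup₂_le fun k hk => ?_
  refine le_of_eq_of_le ?_ (lpNorm2_shiftDiff_le_modulus2 (s := 0) (t := k) ?_)
  · rw [lpNorm2_eq_familyNorm hp (measurable_shiftDiff hF 0 k)]
    unfold shiftDiff
    simp only [add_zero]
  · simpa [Real.sqrt_sq hk.1] using hk.2

lemma familyModulus_swap_shiftDiff_le_mixedModulus (hp : 0 < p)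
    (hF : Measurable (Function.uncurry F)) (s : ℝ) {k t : ℝ} (hk : k ∈ Icc 0 t) :
    familyModulus unitMeasure p (Function.swap (shiftDiff 0 k F)) s ≤ mixedModulus p F s t := by
  refine iSup₂_le fun l hl => ?_
  have hmeas := measurable_shiftDiff (measurable_shiftDiff hF 0 k) l 0
  refine le_of_eq_of_le ?_ (lpNorm2_shiftDiff_le_mixedModulus hl hk)
  rw [shiftDiff_comm, ← lpNorm2_swap hp hmeas,
    lpNorm2_eq_familyNorm (f := Function.swap (shiftDiff l 0 (shiftDiff 0 k F))) hp
      (hmeas.comp measurable_swap)]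
  congr 1 with a b
  simp only [Function.swap, shiftDiff, add_zero]

lemma familyNorm_count_increments {m : ℕ} {x : ℕ → ℝ} (p : ℝ)
    (hF : Measurable (Function.uncurry F)) :
    familyNorm (Measure.count : Measure (Fin m)) p (fun i b => F (x (i + 1)) b - F (x i) b) =
      familyVariation unitMeasure p m (fun _ => x) (Function.swap F) := by
  have hswap := eLpNorm_comp_measurePreserving (p := ENNReal.ofReal p)
    (measurable_increments (n := m) (G := Function.swap F) (x := fun _ : ℝ => x)
      (hF.comp measurable_swap) fun _ => measurable_const).aestronglyMeasurable
    (Measure.measurePreserving_swap (μ := (Measure.count : Measure (Fin m))) (ν := unitMeasure))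
  exact hswap

lemma familyModulus_increments_le (hp : 1 < p) (hF : ContinuousBiPeriodic F) {m : ℕ}
    {x : ℕ → ℝ} (hx : IsPartition m x) (t : ℝ) :
    familyModulus (Measure.count : Measure (Fin m)) p (fun i b => F (x (i + 1)) b - F (x i) b) t ≤
      384 * besovBound p fun s => mixedModulus p F s t := by
  refine iSup₂_le fun k hk => ?_
  have hdiff := hF.shiftDiff 0 k
  calc _ = familyNorm (Measure.count : Measure (Fin m)) p
        (fun i b => shiftDiff 0 k F (x (i + 1)) b - shiftDiff 0 k F (x i) b) := by
        simp only [shiftDiff, add_zero, sub_sub_sub_comm]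
    _ = _ := familyNorm_count_increments p hdiff.measurable
    _ ≤ 384 * besovBound p (familyModulus unitMeasure p (Function.swap (shiftDiff 0 k F))) :=
        familyVariation_le_besovBound hp hdiff.swap.periodicFamily (fun _ => measurable_const)
          fun _ => hx
    _ ≤ _ := by
        gcongr 384 * ?_
        exact besovBound_mono fun s _ =>
          familyModulus_swap_shiftDiff_le_mixedModulus (by linarith) hF.measurable s hk

-- The one-variable theorem is applied twice: to the increments over `x` as a family indexed by
-- `Fin m`, and to the shifts `F(x, y + t) - F(x, y)` as a family indexed by `y`.
theorem sum_partitionVariation_increments_le_mixedBound (hp : 1 < p) (hF : ContinuousBiPeriodic F)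
    {m n : ℕ} {x : ℕ → ℝ} (hx : IsPartition m x) {y : ℕ → ℕ → ℝ}
    (hy : ∀ i < m, IsPartition n (y i)) :
    (∑ i ∈ Finset.range m,
      partitionVariation p n (y i) (fun b => F (x (i + 1)) b - F (x i) b) ^ p) ^ (1 / p) ≤
        mixedBound p F := by
  have hp0 : 0 < p := by linarith
  have hfamily := hF.periodicFamily_increments m x
  have hmeas : ∀ j, Measurable fun i : Fin m => y i j := fun _ => measurable_of_countable _
  have hsum := familyVariation_rpow (n := n) (μ := Measure.count) hp0 hfamily.measurable hmeas
  rw [lintegral_count, tsum_fintype, Fin.sum_univ_eq_sum_range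
    fun i => partitionVariation p n (y i) (fun b => F (x (i + 1)) b - F (x i) b) ^ p] at hsum
  rw [← hsum, one_div, ENNReal.rpow_rpow_inv hp0.ne']
  refine (familyVariation_le_besovBound hp hfamily hmeas fun i => hy i i.2).trans ?_
  rw [mixedBound_eq_besovBound]
  gcongr 384 * ?_
  exact besovBound_mono fun t _ => familyModulus_increments_le hp hF hx t

lemma lintegral_partitionVariation_le_sectionBound (hp : 1 < p) (hF : ContinuousBiPeriodic F)
    {n : ℕ} {y : ℕ → ℝ} (hy : IsPartition n y) :
    (∫⁻ a, partitionVariation p n y (F a) ^ p ∂unitMeasure) ^ (1 / p) ≤ sectionBound p F := by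
  have hp0 : 0 < p := by linarith
  rw [← familyVariation_rpow (x := fun _ => y) hp0 hF.measurable fun _ => measurable_const,
    one_div, ENNReal.rpow_rpow_inv hp0.ne']
  calc familyVariation unitMeasure p n (fun _ => y) F
      ≤ 384 * besovBound p (familyModulus unitMeasure p F) :=
        familyVariation_le_besovBound hp hF.periodicFamily (fun _ => measurable_const) fun _ => hy
    _ ≤ 384 * besovBound p (modulus2 p F) := by
        gcongr 384 * ?_
        exact besovBound_mono fun t _ => familyModulus_le_modulus2 hp0 hF.measurable t

lemma partitionVariation_le_sub_add (hp : 1 ≤ p) (n : ℕ) (y : ℕ → ℝ) (g h : ℝ → ℝ) :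
    partitionVariation p n y g ≤
      partitionVariation p n y (fun b => g b - h b) + partitionVariation p n y h := by
  refine le_trans ?_ (ENNReal.Lp_add_le _ _ _ hp)
  unfold partitionVariation
  gcongr with j
  refine le_of_eq_of_le ?_ (enorm_add_le _ _)
  congr 1
  ring

/-- The points `a, b, a + 1`, with which a single increment becomes part of a variation sum. -/
def threePoints (a b : ℝ) (j : ℕ) : ℝ := if j = 0 then a else if j = 1 then b else a + 1

lemma isPartition_threePoints {a b : ℝ} (hab : a ≤ b) (hba : b ≤ a + 1) :
    IsPartition 2 (threePoints a b) := by
  refine ⟨fun i hi => ?_, by simp [threePoints]⟩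
  interval_cases i <;> simp [threePoints, hab, hba]

lemma exists_add_intCast_mem_Icc (a b : ℝ) : ∃ k : ℤ, b + k ∈ Icc a (a + 1) :=
  ⟨⌈a - b⌉, by linarith [Int.le_ceil (a - b)], by linarith [Int.ceil_lt_add_one (a - b)]⟩

-- `Φ` is the size of an increment: the absolute value or a variation sum of sections.
lemma apply_le_of_forall_threePoints {X : Type*} [Sub X] (hp : 0 < p) {g : ℝ → X} {Φ : X → ℝ≥0∞}
    (hg : Function.Periodic g 1) {C : ℝ≥0∞}
    (h : ∀ x, IsPartition 2 x →
      (∑ i ∈ Finset.range 2, Φ (g (x (i + 1)) - g (x i)) ^ p) ^ (1 / p) ≤ C)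
    (a b : ℝ) : Φ (g a - g b) ≤ C := by
  obtain ⟨k, hk⟩ := exists_add_intCast_mem_Icc b a
  have hshift : g (a + k) = g a := by simpa using hg.int_mul k a
  refine le_trans ?_ (h _ (isPartition_threePoints hk.1 hk.2))
  rw [one_div, ENNReal.le_rpow_inv_iff hp, Finset.sum_range_succ']
  refine le_of_eq_of_le ?_ le_add_self
  simp [threePoints, hshift]

lemma partitionVariation_sub_le_mixedBound (hp : 1 < p) (hF : ContinuousBiPeriodic F) {n : ℕ}
    {y : ℕ → ℝ} (hy : IsPartition n y) (a b : ℝ) :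
    partitionVariation p n y (fun z => F a z - F b z) ≤ mixedBound p F :=
  apply_le_of_forall_threePoints (by linarith) (g := F) (Φ := partitionVariation p n y)
    (fun x => funext (hF.biPeriodic.1 x))
    (fun _ hx => sum_partitionVariation_increments_le_mixedBound hp hF hx fun _ _ => hy) a b

lemma partitionVariation_section_le (hp : 1 < p) (hF : ContinuousBiPeriodic F) {n : ℕ}
    {y : ℕ → ℝ} (hy : IsPartition n y) (a : ℝ) :
    partitionVariation p n y (F a) ≤ sectionBound p F + mixedBound p F := by
  refine (le_rpow_lintegral_add_of_forall_le (by linarith) fun x => ?_).trans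
    (add_le_add_left (lintegral_partitionVariation_le_sectionBound hp hF hy) _)
  rw [add_comm]
  exact (partitionVariation_le_sub_add hp.le n y (F a) (F x)).trans
    (add_le_add_left (partitionVariation_sub_le_mixedBound hp hF hy a x) _)

lemma enorm_section_sub_le (hp : 1 < p) (hF : ContinuousBiPeriodic F) (a b c : ℝ) :
    ‖F a b - F a c‖ₑ ≤ sectionBound p F + mixedBound p F :=
  apply_le_of_forall_threePoints (by linarith) (Φ := fun v => ‖v‖ₑ) (hF.biPeriodic.2 a)
    (fun _ hy => partitionVariation_section_le hp hF hy a) b c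

/-- The bound for the supremum of a continuous biperiodic function. -/
def supBound (p : ℝ) (f : ℝ → ℝ → ℝ) : ℝ≥0∞ :=
  lpNorm2 p f + 2 * (sectionBound p f + mixedBound p f)

theorem enorm_le_supBound (hp : 1 < p) (hF : ContinuousBiPeriodic F) (a b : ℝ) :
    ‖F a b‖ₑ ≤ supBound p F := by
  have hp0 : 0 < p := by linarith
  have hpoint (z : ℝ × ℝ) : ‖F a b‖ₑ ≤
      ‖Function.uncurry F z‖ₑ + 2 * (sectionBound p F + mixedBound p F) := by
    have hsnd := enorm_section_sub_le hp hF z.1 b z.2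
    have hfst := enorm_section_sub_le hp hF.swap b a z.1
    rw [sectionBound_swap hp0 hF.measurable, mixedBound_swap hp0 hF.measurable] at hfst
    calc ‖F a b‖ₑ = ‖F z.1 z.2 + ((F z.1 b - F z.1 z.2) + (F a b - F z.1 b))‖ₑ := by
          congr 1
          ring
      _ ≤ _ := by
          rw [two_mul]
          exact (enorm_add_le _ _).trans (add_le_add le_rfl
            ((enorm_add_le _ _).trans (add_le_add hsnd hfst)))
  have hmean := le_rpow_lintegral_add_of_forall_le (ρ := unitMeasure.prod unitMeasure) hp0 hpoint
  rwa [← eLpNorm_ofReal_rpow hp0, one_div, ENNReal.rpow_rpow_inv hp0.ne',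
    ← familyNorm, ← lpNorm2_eq_familyNorm hp0 hF.measurable] at hmean

end TwoVariableBounds

/-! ### From variation sums to the class `V_p[V_p]` -/

section MixedVariation

variable {p : ℝ} {F : ℝ → ℝ → ℝ}

lemma sum_iSup_eq_iSup_sum_pi {α ι : Type*} [Nonempty ι] (s : Finset α) (h : α → ι → ℝ≥0∞) :
    ∑ i ∈ s, ⨆ q, h i q = ⨆ π : α → ι, ∑ i ∈ s, h i (π i) := by
  have hpi (i : α) : ⨆ q, h i q = ⨆ π : α → ι, h i (π i) :=
    ((Function.surjective_eval (β := fun _ : α => ι) i).iSup_comp (h i)).symm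
  simp only [hpi]
  refine ENNReal.finsetSum_iSup fun π π' => ?_
  have hmax (i : α) : ∃ q, h i (π i) ≤ h i q ∧ h i (π' i) ≤ h i q :=
    (le_total (h i (π i)) (h i (π' i))).elim (fun hle => ⟨π' i, hle, le_rfl⟩)
      fun hle => ⟨π i, le_rfl, hle⟩
  exact ⟨fun i => (hmax i).choose, fun i => (hmax i).choose_spec⟩

/-- The partitions of a period over which the supremum in `vp` is taken. -/
structure StrictPartition where
  size : ℕ
  points : ℕ → ℝ
  lt_succ : ∀ i < size, points i < points (i + 1)
  last : points size = points 0 + 1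

instance : Nonempty StrictPartition := ⟨⟨1, fun j => j, by simp, by simp⟩⟩

lemma StrictPartition.isPartition (P : StrictPartition) : IsPartition P.size P.points :=
  ⟨fun i hi => (P.lt_succ i hi).le, P.last⟩

lemma ofReal_sum_abs_sub_rpow (hp : 0 ≤ p) (n : ℕ) (y : ℕ → ℝ) (g : ℝ → ℝ) :
    ENNReal.ofReal ((∑ k ∈ Finset.range n, |g (y (k + 1)) - g (y k)| ^ p) ^ (1 / p)) =
      partitionVariation p n y g := by
  have hnonneg (k : ℕ) : 0 ≤ |g (y (k + 1)) - g (y k)| ^ p := by positivity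
  rw [← ENNReal.ofReal_rpow_of_nonneg (Finset.sum_nonneg fun k _ => hnonneg k) (by positivity),
    ENNReal.ofReal_sum_of_nonneg fun k _ => hnonneg k]
  simp only [ofReal_abs_rpow hp, partitionVariation]

lemma vp_eq_iSup (hp : 0 ≤ p) (g : ℝ → ℝ) :
    vp p g = ⨆ P : StrictPartition, partitionVariation p P.size P.points g := by
  simp only [vp, ofReal_sum_abs_sub_rpow hp]
  refine le_antisymm ?_ (iSup_le fun P => ?_)
  · exact iSup₂_le fun n y => iSup₂_le fun hlt hlast => le_iSup_of_le ⟨n, y, hlt, hlast⟩ le_rfl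
  · exact le_iSup₂_of_le P.size P.points (le_iSup₂_of_le P.lt_succ P.last le_rfl)

lemma vp_le_of_forall_isPartition (hp : 0 ≤ p) {g : ℝ → ℝ} {C : ℝ≥0∞}
    (h : ∀ n y, IsPartition n y → partitionVariation p n y g ≤ C) : vp p g ≤ C := by
  rw [vp_eq_iSup hp]
  exact iSup_le fun P => h _ _ P.isPartition

lemma vp_le_sub_add (hp : 1 ≤ p) (g h : ℝ → ℝ) :
    vp p g ≤ vp p (fun b => g b - h b) + vp p h := by
  simp only [vp_eq_iSup (zero_le_one.trans hp)]
  exact iSup_le fun P => (partitionVariation_le_sub_add hp _ _ g h).trans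
    (add_le_add (le_iSup_of_le P le_rfl) (le_iSup_of_le P le_rfl))

lemma vp_sub_comm (p : ℝ) (g h : ℝ → ℝ) :
    vp p (fun b => g b - h b) = vp p fun b => h b - g b := by
  have hincr (u v : ℝ) : |g u - h u - (g v - h v)| = |h u - g u - (h v - g v)| := by
    rw [← abs_neg]
    congr 1
    ring
  simp only [vp, hincr]

lemma IsPartition.pad {n N : ℕ} {y : ℕ → ℝ} (hy : IsPartition n y) (hN : n ≤ N) :
    IsPartition N fun j => y (min j n) := by
  refine ⟨fun i _ => ?_, by simp [hN, hy.last]⟩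
  rcases lt_or_ge i n with h | h
  · simpa only [min_eq_left h.le, min_eq_left (Nat.succ_le_of_lt h)] using hy.le_succ i h
  · simp only [min_eq_right h, min_eq_right (h.trans (Nat.le_succ i)), le_rfl]

lemma partitionVariation_pad (hp : 0 < p) {n N : ℕ} (y : ℕ → ℝ) (hN : n ≤ N) (g : ℝ → ℝ) :
    partitionVariation p N (fun j => y (min j n)) g = partitionVariation p n y g := by
  unfold partitionVariation
  congr 1
  rw [← Finset.sum_subset (Finset.range_mono hN)]
  · refine Finset.sum_congr rfl fun j hj => ?_
    have hlt := Finset.mem_range.1 hj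
    simp only [min_eq_left hlt.le, min_eq_left (Nat.succ_le_of_lt hlt)]
  · intro j _ hj
    have hge : n ≤ j := by simpa using hj
    simp [min_eq_right hge, min_eq_right (hge.trans (Nat.le_succ j)), hp]

lemma sum_vp_increments_le_mixedBound (hp : 1 < p) (hF : ContinuousBiPeriodic F) {m : ℕ}
    {x : ℕ → ℝ} (hx : IsPartition m x) :
    (∑ i ∈ Finset.range m, vp p (fun b => F (x (i + 1)) b - F (x i) b) ^ p) ^ (1 / p) ≤
      mixedBound p F := by
  have hp0 : 0 < p := by linarith
  have hvp (g : ℝ → ℝ) : vp p g ^ p =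
      ⨆ P : StrictPartition, partitionVariation p P.size P.points g ^ p := by
    rw [vp_eq_iSup hp0.le]
    exact (ENNReal.orderIsoRpow p hp0).map_iSup _
  simp only [hvp, sum_iSup_eq_iSup_sum_pi]
  rw [one_div, ENNReal.rpow_inv_le_iff hp0]
  refine iSup_le fun P => ?_
  set N := (Finset.range m).sup fun i => (P i).size
  have hle {i : ℕ} (hi : i ∈ Finset.range m) : (P i).size ≤ N :=
    Finset.le_sup (f := fun i => (P i).size) hi
  have hbound := sum_partitionVariation_increments_le_mixedBound hp hF hx (n := N)
    (y := fun i j => (P i).points (min j (P i).size))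
    fun i hi => (P i).isPartition.pad (hle (Finset.mem_range.2 hi))
  rw [one_div, ENNReal.rpow_inv_le_iff hp0] at hbound
  refine le_of_eq_of_le (Finset.sum_congr rfl fun i hi => ?_) hbound
  rw [partitionVariation_pad hp0 _ (hle hi)]

lemma enorm_toReal_sub_toReal_le {a b D : ℝ≥0∞} (ha : a ≠ ⊤) (hb : b ≠ ⊤) (hab : a ≤ D + b)
    (hba : b ≤ D + a) : ‖a.toReal - b.toReal‖ₑ ≤ D := by
  rcases eq_or_ne D ⊤ with rfl | hD
  · exact le_top
  have hab' := ENNReal.toReal_mono (ENNReal.add_ne_top.2 ⟨hD, hb⟩) hab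
  have hba' := ENNReal.toReal_mono (ENNReal.add_ne_top.2 ⟨hD, ha⟩) hba
  rw [ENNReal.toReal_add hD hb] at hab'
  rw [ENNReal.toReal_add hD ha] at hba'
  rw [Real.enorm_eq_ofReal_abs, ENNReal.ofReal_le_iff_le_toReal hD, abs_le]
  constructor <;> linarith

lemma vp_section_lt_top (hp : 1 < p) (hF : ContinuousBiPeriodic F) (hsection : sectionBound p F < ⊤)
    (hmixed : mixedBound p F < ⊤) (x : ℝ) : vp p (F x) < ⊤ :=
  (vp_le_of_forall_isPartition (by linarith) fun _ _ hy =>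
    partitionVariation_section_le hp hF hy x).trans_lt (ENNReal.add_lt_top.2 ⟨hsection, hmixed⟩)

lemma vp_vp_sections_le_mixedBound (hp : 1 < p) (hF : ContinuousBiPeriodic F)
    (hfin : ∀ x, vp p (F x) < ⊤) : vp p (fun x => (vp p (F x)).toReal) ≤ mixedBound p F := by
  refine vp_le_of_forall_isPartition (by linarith) fun n x hx =>
    le_trans ?_ (sum_vp_increments_le_mixedBound hp hF hx)
  unfold partitionVariation
  gcongr with i
  refine enorm_toReal_sub_toReal_le (hfin _).ne (hfin _).ne (vp_le_sub_add hp.le _ _) ?_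
  rw [vp_sub_comm]
  exact vp_le_sub_add hp.le _ _

theorem memVpVp_and_Wp_le (hp : 1 < p) (hF : ContinuousBiPeriodic F)
    (hsection : sectionBound p F < ⊤) (hmixed : mixedBound p F < ⊤) :
    MemVpVp p F ∧ Wp p F ≤ 2 * mixedBound p F := by
  have hp0 : 0 < p := by linarith
  have hfin := vp_section_lt_top hp hF hsection hmixed
  have hfin' := vp_section_lt_top hp hF.swap (by rwa [sectionBound_swap hp0 hF.measurable])
    (by rwa [mixedBound_swap hp0 hF.measurable])
  have hle := vp_vp_sections_le_mixedBound hp hF hfin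
  have hle' := vp_vp_sections_le_mixedBound hp hF.swap hfin'
  rw [mixedBound_swap hp0 hF.measurable] at hle'
  exact ⟨⟨hfin, hfin', hle.trans_lt hmixed, hle'.trans_lt hmixed⟩,
    two_mul (mixedBound p F) ▸ add_le_add hle hle'⟩

end MixedVariation

/-! ### Mollification -/

section Mollification

variable {p : ℝ} {f : ℝ → ℝ → ℝ}

lemma locallyIntegrable_of_lpNorm2_lt_top (hp : 1 ≤ p) (hf : MeasurableBiPeriodic f)
    (hfin : lpNorm2 p f < ⊤) : LocallyIntegrable (Function.uncurry f) := by
  have hmemLp : MemLp (Function.uncurry f) (ENNReal.ofReal p) (unitMeasure.prod unitMeasure) := by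
    rw [lpNorm2_eq_familyNorm (by linarith) hf.measurable] at hfin
    exact ⟨hf.measurable.aestronglyMeasurable, hfin⟩
  have hint := (hmemLp.integrable (ENNReal.one_le_ofReal.2 hp)).hasFiniteIntegral
  have hinner (x b : ℝ) : ∫⁻ y in Ioc b (b + 1), ‖f x y‖ₑ = ∫⁻ y, ‖f x y‖ₑ ∂unitMeasure :=
    setLIntegral_Ioc_add_one_of_periodic (fun y => by rw [hf.biPeriodic.2]) b
  have houter (a : ℝ) : ∫⁻ x in Ioc a (a + 1), ∫⁻ y, ‖f x y‖ₑ ∂unitMeasure =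
      ∫⁻ x, ∫⁻ y, ‖f x y‖ₑ ∂unitMeasure ∂unitMeasure :=
    setLIntegral_Ioc_add_one_of_periodic (fun x => by simp only [hf.biPeriodic.1]) a
  rintro ⟨a, b⟩
  refine ⟨Ioc (a - 1 / 2) (a - 1 / 2 + 1) ×ˢ Ioc (b - 1 / 2) (b - 1 / 2 + 1),
    prod_mem_nhds (Ioc_mem_nhds (by linarith) (by linarith))
      (Ioc_mem_nhds (by linarith) (by linarith)), hf.measurable.aestronglyMeasurable, ?_⟩
  rw [hasFiniteIntegral_iff_enorm, lintegral_prod _ hf.measurable.enorm.aemeasurable] at hint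
  rw [hasFiniteIntegral_iff_enorm, Measure.volume_eq_prod, ← Measure.prod_restrict,
    lintegral_prod _ hf.measurable.enorm.aemeasurable]
  simpa only [Function.uncurry_apply_pair, hinner, houter] using hint

/-- The convolution of `f` with the normalized bump function `φ`. -/
def mollify (φ : ContDiffBump (0 : ℝ × ℝ)) (f : ℝ → ℝ → ℝ) (x y : ℝ) : ℝ :=
  ∫ t : ℝ × ℝ, φ.normed volume t * f (x - t.1) (y - t.2)

/-- The probability measure whose density is the normalized bump function `φ`. -/
def bumpMeasure (φ : ContDiffBump (0 : ℝ × ℝ)) : Measure (ℝ × ℝ) :=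
  volume.withDensity fun t => ENNReal.ofReal (φ.normed volume t)

variable (φ : ContDiffBump (0 : ℝ × ℝ))

lemma integrable_normed_mul (hf : LocallyIntegrable (Function.uncurry f)) (x y : ℝ) :
    Integrable fun t : ℝ × ℝ => φ.normed volume t * f (x - t.1) (y - t.2) :=
  φ.hasCompactSupport_normed.convolutionExists_left (ContinuousLinearMap.lsmul ℝ ℝ)
    φ.continuous_normed hf (x, y)

lemma continuousBiPeriodic_mollify (hper : BiPeriodic f)
    (hf : LocallyIntegrable (Function.uncurry f)) : ContinuousBiPeriodic (mollify φ f) where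
  continuous := φ.hasCompactSupport_normed.continuous_convolution_left
    (ContinuousLinearMap.lsmul ℝ ℝ) φ.continuous_normed hf
  biPeriodic := ⟨fun x y => by simp only [mollify, add_sub_right_comm x, hper.1],
    fun x y => by simp only [mollify, add_sub_right_comm y, hper.2]⟩

lemma mollify_shiftDiff (hf : LocallyIntegrable (Function.uncurry f)) (s t : ℝ) :
    mollify φ (shiftDiff s t f) = shiftDiff s t (mollify φ f) := by
  ext x y
  simp only [mollify, shiftDiff]
  rw [← integral_sub (integrable_normed_mul φ hf _ _) (integrable_normed_mul φ hf _ _)]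
  simp only [mul_sub, add_sub_right_comm x, add_sub_right_comm y]

lemma mollify_sub_self (hf : LocallyIntegrable (Function.uncurry f)) (x y : ℝ) :
    mollify φ f x y - f x y =
      ∫ t : ℝ × ℝ, φ.normed volume t * (f (x - t.1) (y - t.2) - f x y) := by
  simp only [mul_sub]
  rw [integral_sub (integrable_normed_mul φ hf x y) (φ.integrable_normed.mul_const _),
    integral_mul_const, φ.integral_normed, one_mul, mollify]

instance isProbabilityMeasure_bumpMeasure : IsProbabilityMeasure (bumpMeasure φ) := ⟨by
  rw [bumpMeasure, withDensity_apply _ MeasurableSet.univ, Measure.restrict_univ,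
    ← ofReal_integral_eq_lintegral_ofReal φ.integrable_normed
      (Eventually.of_forall φ.nonneg_normed), φ.integral_normed, ENNReal.ofReal_one]⟩

lemma enorm_integral_normed_mul_le {g : ℝ × ℝ → ℝ} (hg : Measurable g) :
    ‖∫ t, φ.normed volume t * g t‖ₑ ≤ ∫⁻ t, ‖g t‖ₑ ∂bumpMeasure φ := by
  have hdensity : Measurable fun t => ENNReal.ofReal (φ.normed volume t) :=
    φ.continuous_normed.measurable.ennreal_ofReal
  refine (enorm_integral_le_lintegral_enorm _).trans_eq ?_
  rw [bumpMeasure, lintegral_withDensity_eq_lintegral_mul _ hdensity hg.enorm]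
  simp only [Pi.mul_apply, enorm_mul, Real.enorm_of_nonneg (φ.nonneg_normed _)]

lemma ae_bumpMeasure_norm_lt_rOut : ∀ᵐ t ∂bumpMeasure φ, ‖t‖ < φ.rOut := by
  rw [bumpMeasure, ae_withDensity_iff φ.continuous_normed.measurable.ennreal_ofReal]
  refine Eventually.of_forall fun t ht => ?_
  have hsupport : t ∈ Function.support (φ.normed (volume : Measure (ℝ × ℝ))) := fun h =>
    ht (by rw [h, ENNReal.ofReal_zero])
  rwa [φ.support_normed_eq, mem_ball_zero_iff] at hsupport

lemma measurable_mollify (hf : Measurable (Function.uncurry f)) :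
    Measurable (Function.uncurry (mollify φ f)) := by
  have hφ : Measurable (φ.normed (volume : Measure (ℝ × ℝ))) := φ.continuous_normed.measurable
  have hintegrand : Measurable fun w : (ℝ × ℝ) × (ℝ × ℝ) =>
      φ.normed volume w.2 * f (w.1.1 - w.2.1) (w.1.2 - w.2.2) :=
    (hφ.comp measurable_snd).mul
      (hf.comp (measurable_fst.sub measurable_snd : Measurable fun w : (ℝ × ℝ) × (ℝ × ℝ) =>
        w.1 - w.2))
  exact hintegrand.stronglyMeasurable.integral_prod_right.measurable

lemma lpNorm2_le_of_forall_eq_integral_normed (hp : 1 ≤ p) {G : ℝ → ℝ → ℝ}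
    (hG : Measurable (Function.uncurry G)) {D : ℝ × ℝ → ℝ → ℝ → ℝ}
    (hD : Measurable fun w : (ℝ × ℝ) × (ℝ × ℝ) => D w.2 w.1.1 w.1.2) {C : ℝ≥0∞}
    (hrepr : ∀ x y, G x y = ∫ t, φ.normed volume t * D t x y)
    (hC : ∀ᵐ t ∂bumpMeasure φ, lpNorm2 p (D t) ≤ C) : lpNorm2 p G ≤ C := by
  have hp0 : 0 < p := by linarith
  rw [lpNorm2_eq_familyNorm hp0 hG]
  refine eLpNorm_le_of_enorm_le_lintegral (ρ := bumpMeasure φ) (D := fun z t => D t z.1 z.2) hp hD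
    (fun z => ?_) ?_
  · rw [Function.uncurry, hrepr]
    exact enorm_integral_normed_mul_le φ (hD.comp measurable_prodMk_left)
  · filter_upwards [hC] with t ht
    have hDt : Measurable (Function.uncurry (D t)) := hD.comp measurable_prodMk_right
    rwa [lpNorm2_eq_familyNorm hp0 hDt] at ht

lemma lpNorm2_mollify_le (hp : 1 ≤ p) (hf : MeasurableBiPeriodic f) :
    lpNorm2 p (mollify φ f) ≤ lpNorm2 p f := by
  refine lpNorm2_le_of_forall_eq_integral_normed φ hp (measurable_mollify φ hf.measurable)
    (D := fun t x y => f (x - t.1) (y - t.2))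
    (hf.measurable.comp (measurable_fst.sub measurable_snd : Measurable fun w : _ × _ => w.1 - w.2))
    (fun _ _ => rfl) (Eventually.of_forall fun t => ?_)
  simp only [sub_eq_add_neg]
  exact (lpNorm2_translate (by linarith) hf.biPeriodic (-t.1) (-t.2)).le

lemma lpNorm2_mollify_sub_le (hp : 1 ≤ p) (hf : Measurable (Function.uncurry f))
    (hint : LocallyIntegrable (Function.uncurry f)) :
    lpNorm2 p (mollify φ f - f) ≤ modulus2 p f (2 * φ.rOut) := by
  refine lpNorm2_le_of_forall_eq_integral_normed (G := mollify φ f - f) φ hp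
    ((measurable_mollify φ hf).sub hf)
    (D := fun t x y => f (x - t.1) (y - t.2) - f x y)
    ((hf.comp (measurable_fst.sub measurable_snd : Measurable fun w : _ × _ => w.1 - w.2)).sub
      (hf.comp measurable_fst)) (mollify_sub_self φ hint) ?_
  filter_upwards [ae_bumpMeasure_norm_lt_rOut φ] with t ht
  simp only [sub_eq_add_neg _ t.1, sub_eq_add_neg _ t.2]
  refine lpNorm2_shiftDiff_le_modulus2 (Real.sqrt_le_iff.2 ⟨by linarith [φ.rOut_pos], ?_⟩)
  rw [Prod.norm_def, max_lt_iff, Real.norm_eq_abs, Real.norm_eq_abs] at ht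
  rw [neg_sq, neg_sq, ← sq_abs t.1, ← sq_abs t.2]
  nlinarith [abs_nonneg t.1, abs_nonneg t.2]

lemma modulus2_mollify_le (hp : 1 ≤ p) (hf : MeasurableBiPeriodic f)
    (hint : LocallyIntegrable (Function.uncurry f)) (δ : ℝ) :
    modulus2 p (mollify φ f) δ ≤ modulus2 p f δ :=
  modulus2_le fun s t h => by
    rw [← mollify_shiftDiff φ hint]
    exact (lpNorm2_mollify_le φ hp (hf.shiftDiff s t)).trans (lpNorm2_shiftDiff_le_modulus2 h)

lemma mixedModulus_mollify_le (hp : 1 ≤ p) (hf : MeasurableBiPeriodic f)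
    (hfin : lpNorm2 p f < ⊤) (u v : ℝ) :
    mixedModulus p (mollify φ f) u v ≤ mixedModulus p f u v :=
  mixedModulus_le fun s hs t ht => by
    have hfin' : lpNorm2 p (shiftDiff s 0 f) < ⊤ :=
      (lpNorm2_shiftDiff_le hp hf s 0).trans_lt (ENNReal.mul_lt_top (by simp) hfin)
    rw [← mollify_shiftDiff φ (locallyIntegrable_of_lpNorm2_lt_top hp hf hfin),
      ← mollify_shiftDiff φ (locallyIntegrable_of_lpNorm2_lt_top hp (hf.shiftDiff s 0) hfin')]
    exact (lpNorm2_mollify_le φ hp ((hf.shiftDiff s 0).shiftDiff 0 t)).trans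
      (lpNorm2_shiftDiff_le_mixedModulus hs ht)

end Mollification

/-! ### The continuous representative -/

section Representative

open scoped Topology

variable {p : ℝ} {f : ℝ → ℝ → ℝ}

lemma Kp_le_Jp (hp : 1 ≤ p) (hf : MeasurableBiPeriodic f) : Kp p f ≤ 4 * Jp p f := by
  rw [Kp, Jp, ← lintegral_const_mul' _ _ (by simp)]
  refine lintegral_mono fun t => ?_
  calc besovWeight p t * (mixedModulus p f t 1 + mixedModulus p f 1 t)
      ≤ besovWeight p t * (2 * modulus2 p f t + 2 * modulus2 p f t) := by
        gcongr
        · exact mixedModulus_le_modulus2_left hp hf t 1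
        · exact mixedModulus_le_modulus2_right hp hf 1 t
    _ = 4 * (besovWeight p t * modulus2 p f t) := by ring

lemma mixedModulus_le_lpNorm2 (hp : 1 ≤ p) (hf : MeasurableBiPeriodic f) (u v : ℝ) :
    mixedModulus p f u v ≤ 4 * lpNorm2 p f :=
  calc mixedModulus p f u v ≤ 2 * (2 * lpNorm2 p f) :=
        (mixedModulus_le_modulus2_left hp hf u v).trans
          (mul_le_mul_right (modulus2_le_lpNorm2 hp hf u) _)
    _ = 4 * lpNorm2 p f := by ring

lemma sectionBound_lt_top (hp : 1 ≤ p) (hf : MeasurableBiPeriodic f) (hfin : lpNorm2 p f < ⊤)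
    (hJ : Jp p f < ⊤) : sectionBound p f < ⊤ := by
  have hmod : modulus2 p f 1 < ⊤ :=
    (modulus2_le_lpNorm2 hp hf 1).trans_lt (ENNReal.mul_lt_top (by simp) hfin)
  exact ENNReal.mul_lt_top (by simp)
    (ENNReal.add_lt_top.2 ⟨hmod, ENNReal.mul_lt_top ENNReal.ofReal_lt_top hJ⟩)

lemma mixedBound_lt_top (hp : 1 ≤ p) (hf : MeasurableBiPeriodic f) (hfin : lpNorm2 p f < ⊤)
    (hI : Ip p f < ⊤) (hJ : Jp p f < ⊤) : mixedBound p f < ⊤ := by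
  have hmod : mixedModulus p f 1 1 < ⊤ :=
    (mixedModulus_le_lpNorm2 hp hf 1 1).trans_lt (ENNReal.mul_lt_top (by simp) hfin)
  have hK : Kp p f < ⊤ := (Kp_le_Jp hp hf).trans_lt (ENNReal.mul_lt_top (by simp) hJ)
  exact ENNReal.mul_lt_top (by simp) (ENNReal.add_lt_top.2
    ⟨ENNReal.add_lt_top.2 ⟨hmod, ENNReal.mul_lt_top ENNReal.ofReal_lt_top hK⟩,
      ENNReal.mul_lt_top (by simp) hI⟩)

lemma le_two_mul_setLIntegral_besovWeight_mul (hp : 0 ≤ p) {ω : ℝ → ℝ≥0∞} (hω : Monotone ω) {t : ℝ}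
    (ht : 0 < t) (ht' : 2 * t ≤ 1) :
    ω t ≤ 2 * ∫⁻ s in Ioc t (2 * t), besovWeight p s * ω s := by
  have hweight {s : ℝ} (hs : s ∈ Ioc t (2 * t)) : (2 * t)⁻¹ ≤ s ^ (-(1 / p)) / s := by
    have hs0 : 0 < s := ht.trans hs.1
    rw [div_eq_mul_inv]
    exact (inv_anti₀ hs0 hs.2).trans (le_mul_of_one_le_left (by positivity)
      (Real.one_le_rpow_of_pos_of_le_one_of_nonpos hs0 (hs.2.trans ht')
        (neg_nonpos.2 (by positivity))))
  calc ω t = 2 * ∫⁻ _ in Ioc t (2 * t), ENNReal.ofReal (2 * t)⁻¹ * ω t := by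
        rw [setLIntegral_const, Real.volume_Ioc, mul_right_comm, ← mul_assoc,
          ← ENNReal.ofReal_mul (by positivity),
          show (2 * t)⁻¹ * (2 * t - t) = 2⁻¹ by field_simp; ring,
          ENNReal.ofReal_inv_of_pos two_pos, ENNReal.ofReal_ofNat,
          ENNReal.mul_inv_cancel two_ne_zero ENNReal.ofNat_ne_top, one_mul]
    _ ≤ 2 * ∫⁻ s in Ioc t (2 * t), besovWeight p s * ω s := by
        gcongr 2 * ?_
        exact setLIntegral_mono' measurableSet_Ioc fun s hs =>
          mul_le_mul' (ENNReal.ofReal_le_ofReal (hweight hs)) (hω hs.1.le)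

section Domination

variable {ι : Type*} {l : Filter ι} {G : ι → ℝ → ℝ → ℝ}

lemma tendsto_const_mul_zero {u : ι → ℝ≥0∞} {c : ℝ≥0∞} (hc : c ≠ ⊤) (hu : Tendsto u l (𝓝 0)) :
    Tendsto (fun i => c * u i) l (𝓝 0) := by
  simpa only [mul_zero] using ENNReal.Tendsto.const_mul hu (Or.inr hc)

lemma tendsto_zero_of_le_const_mul {u v : ι → ℝ≥0∞} {c : ℝ≥0∞} (hc : c ≠ ⊤)
    (huv : ∀ᶠ i in l, u i ≤ c * v i) (hv : Tendsto v l (𝓝 0)) : Tendsto u l (𝓝 0) :=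
  tendsto_of_tendsto_of_tendsto_of_le_of_le' tendsto_const_nhds (tendsto_const_mul_zero hc hv)
    (.of_forall fun _ => zero_le) huv

lemma tendsto_zero_of_lintegral_besovWeight_mul (hp : 0 ≤ p) {ω : ℝ → ℝ≥0∞} (hω : Monotone ω)
    (hfin : ∫⁻ t in Ioc (0 : ℝ) 1, besovWeight p t * ω t ≠ ⊤) : Tendsto ω (𝓝[>] 0) (𝓝 0) := by
  have hle : ∀ᶠ t in 𝓝[>] (0 : ℝ),
      ω t ≤ 2 * ∫⁻ s in Ioc t (2 * t), besovWeight p s * ω s ∂unitMeasure := by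
    filter_upwards [Ioc_mem_nhdsGT (show (0 : ℝ) < 1 / 2 by norm_num)] with t ht
    have ht' : 2 * t ≤ 1 := by linarith [ht.2]
    rw [Measure.restrict_restrict_of_subset (Ioc_subset_Ioc ht.1.le ht')]
    exact le_two_mul_setLIntegral_besovWeight_mul hp hω ht.1 ht'
  have hlength : Tendsto (fun t : ℝ => volume (Ioc t (2 * t))) (𝓝[>] 0) (𝓝 0) := by
    have hcont : Continuous fun t : ℝ => ENNReal.ofReal (2 * t - t) :=
      ENNReal.continuous_ofReal.comp (by fun_prop)
    simpa [Real.volume_Ioc] using (hcont.tendsto 0).mono_left nhdsWithin_le_nhds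
  have hvolume : Tendsto (fun t => unitMeasure (Ioc t (2 * t))) (𝓝[>] 0) (𝓝 0) :=
    tendsto_of_tendsto_of_tendsto_of_le_of_le tendsto_const_nhds hlength
      (fun _ => zero_le) fun _ => Measure.restrict_apply_le _ _
  exact tendsto_zero_of_le_const_mul (by simp) hle (tendsto_setLIntegral_zero hfin hvolume)

lemma tendsto_Jp_zero [l.IsCountablyGenerated] (hp : 1 ≤ p)
    (hG : ∀ i, MeasurableBiPeriodic (G i)) (hmod : ∀ i t, modulus2 p (G i) t ≤ 2 * modulus2 p f t)
    (hJ : Jp p f < ⊤) (hlim : Tendsto (fun i => lpNorm2 p (G i)) l (𝓝 0)) :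
    Tendsto (fun i => Jp p (G i)) l (𝓝 0) := by
  rw [← lintegral_zero (μ := unitMeasure)]
  refine tendsto_lintegral_filter_of_dominated_convergence
    (fun t => 2 * (besovWeight p t * modulus2 p f t))
    (.of_forall fun i => measurable_besovWeight_mul modulus2_mono)
    (.of_forall fun i => .of_forall fun t => ?_) ?_
    (.of_forall fun t => tendsto_const_mul_zero ENNReal.ofReal_ne_top ?_)
  · rw [mul_left_comm]
    exact mul_le_mul_right (hmod i t) _
  · rw [lintegral_const_mul' _ _ (by simp)]
    exact ENNReal.mul_ne_top (by simp) hJ.ne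
  · exact tendsto_zero_of_le_const_mul (by simp)
      (.of_forall fun i => modulus2_le_lpNorm2 hp (hG i) t) hlim

lemma tendsto_Ip_zero [l.IsCountablyGenerated] (hp : 1 ≤ p)
    (hG : ∀ i, MeasurableBiPeriodic (G i))
    (hmixed : ∀ i u v, mixedModulus p (G i) u v ≤ 2 * mixedModulus p f u v)
    (hI : Ip p f < ⊤) (hlim : Tendsto (fun i => lpNorm2 p (G i)) l (𝓝 0)) :
    Tendsto (fun i => Ip p (G i)) l (𝓝 0) := by
  simp only [Ip_eq_lintegral_prod] at hI ⊢
  rw [← lintegral_zero (μ := unitMeasure.prod unitMeasure)]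
  refine tendsto_lintegral_filter_of_dominated_convergence' (fun z => 2 * mixedIntegrand p f z)
    (.of_forall fun i => aemeasurable_mixedIntegrand p (G i))
    (.of_forall fun i => .of_forall fun z => ?_) ?_
    (.of_forall fun z => tendsto_const_mul_zero
      (ENNReal.mul_ne_top ENNReal.ofReal_ne_top ENNReal.ofReal_ne_top) ?_)
  · rw [mixedIntegrand, mixedIntegrand, mul_left_comm]
    exact mul_le_mul_right (hmixed i z.1 z.2) _
  · rw [lintegral_const_mul' _ _ (by simp)]
    exact ENNReal.mul_ne_top (by simp) hI.ne
  · exact tendsto_zero_of_le_const_mul (by simp)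
      (.of_forall fun i => mixedModulus_le_lpNorm2 hp (hG i) z.1 z.2) hlim

lemma tendsto_supBound_zero [l.IsCountablyGenerated] (hp : 1 ≤ p)
    (hG : ∀ i, MeasurableBiPeriodic (G i)) (hmod : ∀ i t, modulus2 p (G i) t ≤ 2 * modulus2 p f t)
    (hmixed : ∀ i u v, mixedModulus p (G i) u v ≤ 2 * mixedModulus p f u v)
    (hI : Ip p f < ⊤) (hJ : Jp p f < ⊤) (hlim : Tendsto (fun i => lpNorm2 p (G i)) l (𝓝 0)) :
    Tendsto (fun i => supBound p (G i)) l (𝓝 0) := by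
  have add_zero_limits {u v : ι → ℝ≥0∞} (hu : Tendsto u l (𝓝 0)) (hv : Tendsto v l (𝓝 0)) :
      Tendsto (fun i => u i + v i) l (𝓝 0) := by simpa only [add_zero] using hu.add hv
  have hJlim := tendsto_Jp_zero hp hG hmod hJ hlim
  have hIlim := tendsto_Ip_zero hp hG hmixed hI hlim
  have hKlim := tendsto_zero_of_le_const_mul (by simp)
    (.of_forall fun i => Kp_le_Jp hp (hG i)) hJlim
  have hmodlim : Tendsto (fun i => modulus2 p (G i) 1) l (𝓝 0) :=
    tendsto_zero_of_le_const_mul (by simp)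
      (.of_forall fun i => modulus2_le_lpNorm2 hp (hG i) 1) hlim
  have hmixedlim : Tendsto (fun i => mixedModulus p (G i) 1 1) l (𝓝 0) :=
    tendsto_zero_of_le_const_mul (by simp)
      (.of_forall fun i => mixedModulus_le_lpNorm2 hp (hG i) 1 1) hlim
  have hsection : Tendsto (fun i => sectionBound p (G i)) l (𝓝 0) :=
    tendsto_const_mul_zero (by simp)
      (add_zero_limits hmodlim (tendsto_const_mul_zero (by simp) hJlim))
  have hbound : Tendsto (fun i => mixedBound p (G i)) l (𝓝 0) :=
    tendsto_const_mul_zero (by simp) (add_zero_limits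
      (add_zero_limits hmixedlim (tendsto_const_mul_zero (by simp) hKlim))
      (tendsto_const_mul_zero (by simp) hIlim))
  exact add_zero_limits hlim (tendsto_const_mul_zero (by simp) (add_zero_limits hsection hbound))

end Domination

section Limit

variable {φ : ℕ → ContDiffBump (0 : ℝ × ℝ)}

lemma tendsto_lpNorm2_mollify_sub (hp : 1 ≤ p) (hf : MeasurableBiPeriodic f)
    (hfin : lpNorm2 p f < ⊤) (hJ : Jp p f < ⊤)
    (hφ : Tendsto (fun n => (φ n).rOut) atTop (𝓝 0)) :
    Tendsto (fun n => lpNorm2 p (mollify (φ n) f - f)) atTop (𝓝 0) := by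
  have hint := locallyIntegrable_of_lpNorm2_lt_top hp hf hfin
  have hradius : Tendsto (fun n => 2 * (φ n).rOut) atTop (𝓝[>] 0) :=
    tendsto_nhdsWithin_iff.2 ⟨by simpa using hφ.const_mul 2,
      .of_forall fun n => mul_pos two_pos (φ n).rOut_pos⟩
  have hmod := tendsto_zero_of_lintegral_besovWeight_mul (by linarith) modulus2_mono hJ.ne
  exact tendsto_of_tendsto_of_tendsto_of_le_of_le tendsto_const_nhds (hmod.comp hradius)
    (fun _ => zero_le) fun n => lpNorm2_mollify_sub_le (φ n) hp hf.measurable hint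

lemma tendsto_supBound_mollify_sub (hp : 1 ≤ p) (hf : MeasurableBiPeriodic f)
    (hfin : lpNorm2 p f < ⊤) (hI : Ip p f < ⊤) (hJ : Jp p f < ⊤)
    (hφ : Tendsto (fun n => (φ n).rOut) atTop (𝓝 0)) :
    Tendsto (fun k : ℕ × ℕ => supBound p (mollify (φ k.1) f - mollify (φ k.2) f))
      (atTop ×ˢ atTop) (𝓝 0) := by
  have hint := locallyIntegrable_of_lpNorm2_lt_top hp hf hfin
  have hcont (n : ℕ) := (continuousBiPeriodic_mollify (φ n) hf.biPeriodic hint).measurableBiPeriodic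
  have hmeas (n : ℕ) := (hcont n).measurable
  have hdiff := tendsto_lpNorm2_mollify_sub hp hf hfin hJ hφ
  refine tendsto_supBound_zero hp (fun k => (hcont k.1).sub (hcont k.2)) (fun k t => ?_)
    (fun k u v => ?_) hI hJ ?_
  · rw [two_mul]
    exact (modulus2_sub_le hp (hmeas _) (hmeas _) t).trans
      (add_le_add (modulus2_mollify_le _ hp hf hint t) (modulus2_mollify_le _ hp hf hint t))
  · rw [two_mul]
    exact (mixedModulus_sub_le hp (hmeas _) (hmeas _) u v).trans
      (add_le_add (mixedModulus_mollify_le _ hp hf hfin u v)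
        (mixedModulus_mollify_le _ hp hf hfin u v))
  · have hsum := (hdiff.comp tendsto_fst).add (hdiff.comp tendsto_snd)
    rw [add_zero] at hsum
    refine tendsto_of_tendsto_of_tendsto_of_le_of_le tendsto_const_nhds hsum (fun _ => zero_le)
      fun k => ?_
    rw [← sub_sub_sub_cancel_right (mollify (φ k.1) f) (mollify (φ k.2) f) f]
    exact lpNorm2_sub_le hp ((hcont k.1).sub hf).measurable ((hcont k.2).sub hf).measurable

lemma uniformCauchySeqOn_mollify (hp : 1 < p) (hf : MeasurableBiPeriodic f)
    (hfin : lpNorm2 p f < ⊤) (hI : Ip p f < ⊤) (hJ : Jp p f < ⊤)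
    (hφ : Tendsto (fun n => (φ n).rOut) atTop (𝓝 0)) :
    UniformCauchySeqOn (fun n => Function.uncurry (mollify (φ n) f)) atTop univ := by
  have hint := locallyIntegrable_of_lpNorm2_lt_top hp.le hf hfin
  have hcont (n : ℕ) := continuousBiPeriodic_mollify (φ n) hf.biPeriodic hint
  intro U hU
  obtain ⟨ε, hε, hεU⟩ := mem_uniformity_edist.1 hU
  filter_upwards [(tendsto_supBound_mollify_sub hp.le hf hfin hI hJ hφ).eventually (gt_mem_nhds hε)]
    with k hk z _
  refine hεU (lt_of_le_of_lt ?_ hk)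
  rw [edist_eq_enorm_sub]
  exact enorm_le_supBound hp ((hcont k.1).sub (hcont k.2)) z.1 z.2

end Limit

lemma exists_continuousBiPeriodic_tendsto {G : ℕ → ℝ → ℝ → ℝ}
    (hG : ∀ n, ContinuousBiPeriodic (G n))
    (hcauchy : UniformCauchySeqOn (fun n => Function.uncurry (G n)) atTop univ) :
    ∃ F, ContinuousBiPeriodic F ∧ ∀ x y, Tendsto (fun n => G n x y) atTop (𝓝 (F x y)) := by
  choose F hF using fun x y =>
    cauchySeq_tendsto_of_complete (hcauchy.cauchySeq (mem_univ (x, y)))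
  have huniform : TendstoUniformly (fun n => Function.uncurry (G n)) (Function.uncurry F) atTop :=
    tendstoUniformlyOn_univ.1
      (hcauchy.tendstoUniformlyOn_of_tendsto fun z _ => hF z.1 z.2)
  refine ⟨F, ⟨huniform.continuous (Frequently.of_forall fun n => (hG n).continuous),
    fun x y => ?_, fun x y => ?_⟩, hF⟩
  · exact tendsto_nhds_unique (hF (x + 1) y)
      ((hF x y).congr fun n => ((hG n).biPeriodic.1 x y).symm)
  · exact tendsto_nhds_unique (hF x (y + 1))
      ((hF x y).congr fun n => ((hG n).biPeriodic.2 x y).symm)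

lemma exists_contDiffBump_seq : ∃ φ : ℕ → ContDiffBump (0 : ℝ × ℝ),
    Tendsto (fun n => (φ n).rOut) atTop (𝓝 0) ∧ ∀ n, (φ n).rOut ≤ 2 * (φ n).rIn := by
  refine ⟨fun n => ⟨1 / (n + 1), 2 * (1 / (n + 1)), by positivity, ?_⟩, ?_, fun n => le_rfl⟩
  · have hpos : 0 < 1 / ((n : ℝ) + 1) := by positivity
    linarith
  · simpa only [mul_zero] using (tendsto_one_div_add_atTop_nhds_zero_nat (𝕜 := ℝ)).const_mul 2

theorem exists_continuousBiPeriodic_ae_eq (hp : 1 < p) (hf : MeasurableBiPeriodic f)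
    (hfin : lpNorm2 p f < ⊤) (hI : Ip p f < ⊤) (hJ : Jp p f < ⊤) :
    ∃ F, ContinuousBiPeriodic F ∧ ∀ᵐ z : ℝ × ℝ, f z.1 z.2 = F z.1 z.2 := by
  have hint := locallyIntegrable_of_lpNorm2_lt_top hp.le hf hfin
  obtain ⟨φ, hφ, hratio⟩ := exists_contDiffBump_seq
  obtain ⟨F, hF, hlim⟩ := exists_continuousBiPeriodic_tendsto
    (fun n => continuousBiPeriodic_mollify (φ n) hf.biPeriodic hint)
    (uniformCauchySeqOn_mollify hp hf hfin hI hJ hφ)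
  refine ⟨F, hF, ?_⟩
  filter_upwards [ContDiffBump.ae_convolution_tendsto_right_of_locallyIntegrable hφ
    (.of_forall hratio) hint] with z hz
  exact tendsto_nhds_unique hz (hlim z.1 z.2)

lemma sectionBound_congr_ae {g : ℝ → ℝ → ℝ} (h : ∀ᵐ z : ℝ × ℝ, f z.1 z.2 = g z.1 z.2) :
    sectionBound p f = sectionBound p g := by
  rw [sectionBound, sectionBound, modulus2_congr_ae h]

lemma mixedBound_congr_ae {g : ℝ → ℝ → ℝ} (h : ∀ᵐ z : ℝ × ℝ, f z.1 z.2 = g z.1 z.2) :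
    mixedBound p f = mixedBound p g := by
  simp only [mixedBound, Kp, Ip, mixedModulus_congr_ae h]

lemma mul_mixedBound_eq (hp : 1 < p) (f : ℝ → ℝ → ℝ) :
    2 * mixedBound p f = ENNReal.ofReal (2 * 384 ^ 2) * (mixedModulus p f 1 1
      + ENNReal.ofReal (1 / (p * (p / (p - 1)))) * Kp p f
      + ENNReal.ofReal ((1 / (p * (p / (p - 1)))) ^ 2) * Ip p f) := by
  have : 0 < p - 1 := sub_pos.2 hp
  have : 0 < p := by linarith
  rw [ENNReal.ofReal_pow (by positivity), mixedBound, ← mul_assoc,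
    ENNReal.ofReal_mul (by norm_num), ENNReal.ofReal_pow (by norm_num), ENNReal.ofReal_ofNat,
    ENNReal.ofReal_ofNat]

end Representative

end

/-- If `1 < p < ∞`, `f ∈ L^p([0,1]²)`, `I_p(f) < ∞` and `J_p(f) < ∞`,
then `f` agrees a.e. with a continuous `f̄ ∈ V_p[V_p]` and
`W_p(f̄) ≤ A [ω(f;1,1)_p + (1/(pp')) K_p(f) + (1/(pp'))² I_p(f)]` for an absolute
constant `A`. -/
theorem statement19 :
    ∃ A : ℝ, 0 < A ∧
      ∀ (p : ℝ), 1 < p → ∀ f : ℝ → ℝ → ℝ,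
        MemLp2 p f → Ip p f < ⊤ → Jp p f < ⊤ →
          ∃ fbar : ℝ → ℝ → ℝ,
            Continuous (Function.uncurry fbar) ∧ BiPeriodic fbar ∧ MemVpVp p fbar ∧
            (∀ᵐ z : ℝ × ℝ ∂volume, f z.1 z.2 = fbar z.1 z.2) ∧
            Wp p fbar ≤ ENNReal.ofReal A *
              (mixedModulus p f 1 1
                + ENNReal.ofReal (1 / (p * (p / (p - 1)))) * Kp p f
                + ENNReal.ofReal ((1 / (p * (p / (p - 1)))) ^ 2) * Ip p f) := by
  refine ⟨2 * 384 ^ 2, by norm_num, fun p hp f ⟨hmeas, hper, hfin⟩ hI hJ => ?_⟩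
  have hf : MeasurableBiPeriodic f := ⟨hmeas, hper⟩
  obtain ⟨F, hF, hae⟩ := exists_continuousBiPeriodic_ae_eq hp hf hfin hI hJ
  have hsection : sectionBound p F < ⊤ :=
    sectionBound_congr_ae hae ▸ sectionBound_lt_top hp.le hf hfin hJ
  have hmixed : mixedBound p F < ⊤ :=
    mixedBound_congr_ae hae ▸ mixedBound_lt_top hp.le hf hfin hI hJ
  obtain ⟨hmem, hW⟩ := memVpVp_and_Wp_le hp hF hsection hmixed
  rw [← mixedBound_congr_ae hae, mul_mixedBound_eq hp] at hW
  exact ⟨F, hF.continuous, hF.biPeriodic, hmem, hae, hW⟩
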